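/- Let k ≥ 4 be an integer, let H be a 2-contractible ℓ-overlapping k-tree with cross-cut number σ = σ(H), and let p = p(n) ∈ [0,1] satisfy p(n)·n^{k−ℓ−1}/(log n)² → ∞ as n → ∞. Then for every ε > 0, the probability that (σ−1−ε)·p·C(n,k−1) ≤ ex(G^(k)(n,p), H) ≤ (σ−1+ε)·p·C(n,k−1) tends to 1 as n → ∞; that is, with high probability ex(G^(k)(n,p), H) = (σ−1+o(1))·p·C(n,k−1). -/

import Mathlib

open Finset Filter

attribute [local instance] Classical.propDecidable

/-- The vertex set `[n] = {1,…,n}`. -/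
def vtx (n : ℕ) : Finset ℕ := Finset.Icc 1 n

/-- `F` is a `k`-graph on `[n]`: a family of `k`-element subsets of `[n]`. -/
def IsKGraphOn (k n : ℕ) (F : Finset (Finset ℕ)) : Prop :=
  ∀ E ∈ F, E ⊆ vtx n ∧ E.card = k

/-- The vertex set of a hypergraph (union of its edges). -/
def vertexSet {α : Type} [DecidableEq α] (H : Finset (Finset α)) : Finset α := H.sup id

/-- The degree of a vertex: the number of edges containing it. -/
def vdeg {α : Type} [DecidableEq α] (H : Finset (Finset α)) (v : α) : ℕ :=
  (H.filter fun E => v ∈ E).card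

/-- Hypertrees, defined recursively: a single edge is a hypertree, and a hypertree grows
by adding a new leaf edge `E` whose intersection with the current vertex set equals its
intersection with some existing (parent) edge `F`. -/
inductive IsHypertree {α : Type} [DecidableEq α] : Finset (Finset α) → Prop
  | single (E : Finset α) : IsHypertree {E}
  | grow {H : Finset (Finset α)} (E F : Finset α) (hH : IsHypertree H) (hE : E ∉ H)
      (hF : F ∈ H) (hint : E ∩ vertexSet H = E ∩ F) : IsHypertree (insert E H)

/-- A `k`-tree: a `k`-uniform hypertree. -/
def IsKTree {α : Type} [DecidableEq α] (k : ℕ) (H : Finset (Finset α)) : Prop :=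
  IsHypertree H ∧ ∀ E ∈ H, E.card = k

/-- A hypergraph is 2-contractible if every edge contains at least two vertices of degree 1. -/
def TwoContractible {α : Type} [DecidableEq α] (H : Finset (Finset α)) : Prop :=
  ∀ E ∈ H, 2 ≤ (E.filter fun v => vdeg H v = 1).card

/-- `S` is a cross-cut of `H`: every edge meets `S` in exactly one vertex. -/
def IsCrosscut {α : Type} [DecidableEq α] (H : Finset (Finset α)) (S : Finset α) : Prop :=
  ∀ E ∈ H, (E ∩ S).card = 1

/-- `σ` is the cross-cut number of `H`: the minimum size of a cross-cut. -/
def IsCrosscutNumber {α : Type} [DecidableEq α] (H : Finset (Finset α)) (σ : ℕ) : Prop :=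
  IsLeast {m | ∃ S : Finset α, IsCrosscut H S ∧ S.card = m} σ

/-- A hypergraph is `ℓ`-overlapping if any two distinct edges meet in at most `ℓ` vertices. -/
def Overlapping {α : Type} [DecidableEq α] (ℓ : ℕ) (H : Finset (Finset α)) : Prop :=
  ∀ E ∈ H, ∀ F ∈ H, E ≠ F → (E ∩ F).card ≤ ℓ

/-- `K` is (the edge set of) a copy of `H`, i.e. the image of `H` under a map that is
injective on the vertex set of `H`. -/
def IsCopyOf {α : Type} [DecidableEq α] (H : Finset (Finset α)) (K : Finset (Finset ℕ)) : Prop :=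
  ∃ φ : α → ℕ, Set.InjOn φ ↑(vertexSet H) ∧ K = H.image fun E => E.image φ

/-- `F` contains no subgraph isomorphic to `H`. -/
def HFree {α : Type} [DecidableEq α] (H : Finset (Finset α)) (F : Finset (Finset ℕ)) : Prop :=
  ∀ K ⊆ F, ¬ IsCopyOf H K

/-- The collection of copies of `H` in `F` (as distinct subgraphs of `F`). -/
noncomputable def copies {α : Type} [DecidableEq α] (H : Finset (Finset α))
    (F : Finset (Finset ℕ)) : Finset (Finset (Finset ℕ)) :=
  F.powerset.filter (IsCopyOf H)

/-- The number of `H`-free `k`-graphs on the vertex set `[n]`. -/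
noncomputable def forb {α : Type} [DecidableEq α] (n k : ℕ) (H : Finset (Finset α)) : ℕ :=
  (((vtx n).powersetCard k).powerset.filter (HFree H)).card

/-- `H` is a `k`-uniform linear cycle of length `ℓ`. -/
def IsLinearCycle {α : Type} [DecidableEq α] (k ℓ : ℕ) (H : Finset (Finset α)) : Prop :=
  ∃ E : ℕ → Finset α,
    (∀ i < ℓ, (E i).card = k) ∧
    (∀ i < ℓ, ∀ j < ℓ, i ≠ j → E i ≠ E j) ∧
    (∀ i < ℓ, (E i ∩ E ((i + 1) % ℓ)).card = 1) ∧
    (∀ i < ℓ, ∀ j < ℓ, i ≠ j → E i ∩ E ((i + 1) % ℓ) ≠ E j ∩ E ((j + 1) % ℓ)) ∧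
    (∀ i < ℓ, ∀ j < ℓ, i ≠ j → (i + 1) % ℓ ≠ j → (j + 1) % ℓ ≠ i → Disjoint (E i) (E j)) ∧
    H = (Finset.range ℓ).image E

/-- `(X 0, …, X (k-1))` is a `k`-partition of `F`. -/
def IsKPartition (k : ℕ) (F : Finset (Finset ℕ)) (X : Fin k → Finset ℕ) : Prop :=
  (∀ i j, i ≠ j → Disjoint (X i) (X j)) ∧ ∀ E ∈ F, ∀ i, (E ∩ X i).card = 1

/-- The `J`-projection of an edge. -/
def projJ {k : ℕ} (X : Fin k → Finset ℕ) (J : Finset (Fin k)) (E : Finset ℕ) : Finset ℕ :=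
  E ∩ J.sup X

/-- The pattern of a vertex set. -/
def pattern {k : ℕ} (X : Fin k → Finset ℕ) (D : Finset ℕ) : Finset (Fin k) :=
  Finset.univ.filter fun i => (D ∩ X i).Nonempty

/-- `MI(F)`: the patterns of intersections of pairs of distinct edges. -/
noncomputable def MI {k : ℕ} (F : Finset (Finset ℕ)) (X : Fin k → Finset ℕ) :
    Finset (Finset (Fin k)) :=
  ((F ×ˢ F).filter fun p => p.1 ≠ p.2).image fun p => pattern X (p.1 ∩ p.2)

/-- The link of a vertex set `D` in `F`. -/
def link {α : Type} [DecidableEq α] (F : Finset (Finset α)) (D : Finset α) :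
    Finset (Finset α) :=
  (F.filter fun E => D ⊆ E).image fun E => E \ D

/-- The degree of a vertex set `D` in `F`: the size of its link. -/
def setDeg {α : Type} [DecidableEq α] (F : Finset (Finset α)) (D : Finset α) : ℕ :=
  (link F D).card

/-- A nonempty hypergraph is `s`-diverse if every vertex has degree less than `|H|/s`. -/
def SDiverse {α : Type} [DecidableEq α] (s : ℕ) (H : Finset (Finset α)) : Prop :=
  H.Nonempty ∧ ∀ v : α, s * vdeg H v < H.card

/-- `D` is `s`-strong in `F` if its link is `s`-diverse. -/
def SStrong {α : Type} [DecidableEq α] (s : ℕ) (F : Finset (Finset α)) (D : Finset α) : Prop :=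
  SDiverse s (link F D)

/-- `F`, with `k`-partition `X`, is `s`-super-homogeneous: for every `J ∈ MI(F)` and every
edge `E ∈ F`, the projection `E_J` is `s`-strong and `d_F(E_J) ≥ max{s, |F|/(2k·n^|J|)}`. -/
def SuperHomogeneous (n k s : ℕ) (F : Finset (Finset ℕ)) (X : Fin k → Finset ℕ) : Prop :=
  ∀ J ∈ MI F X, ∀ E ∈ F,
    SStrong s F (projJ X J E) ∧
    s ≤ setDeg F (projJ X J E) ∧
    (F.card : ℝ) / (2 * k * (n : ℝ) ^ J.card) ≤ (setDeg F (projJ X J E) : ℝ)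

/-- The rank of a family of subsets of `[k]`: the minimum size of a set `D ⊆ [k]` contained
in no member of the family. -/
noncomputable def rankFam (k : ℕ) (𝒥 : Finset (Finset (Fin k))) : ℕ :=
  sInf {d | ∃ D : Finset (Fin k), D.card = d ∧ ∀ J ∈ 𝒥, ¬ D ⊆ J}

/-- A family of subsets of `[k]` is of type 1 if it contains the full power set of some
`(k-2)`-set `B`. -/
def TypeOne (k : ℕ) (𝒥 : Finset (Finset (Fin k))) : Prop :=
  ∃ B : Finset (Fin k), B.card = k - 2 ∧ ∀ S ⊆ B, S ∈ 𝒥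

/-- The constant `c(k,s) = k!/(k^k·(2s(1+2^k))^(2^k))`. -/
noncomputable def cks (k s : ℕ) : ℝ :=
  (Nat.factorial k : ℝ) / ((k : ℝ) ^ k * (2 * (s : ℝ) * (1 + 2 ^ k)) ^ (2 ^ k))

/-- Degree of a set of vertices in a (uniform) hypergraph `K`: number of edges containing it. -/
def uDeg {α : Type} [DecidableEq α] (K : Finset (Finset α)) (S : Finset α) : ℕ :=
  (K.filter fun e => S ⊆ e).card

/-- A `t`-uniform hypergraph is `d`-graded if `d_K(S) ≤ d^(t-|S|)` for all `S` with
`1 ≤ |S| ≤ t`. -/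
def Graded {α : Type} [DecidableEq α] (t : ℕ) (d : ℝ) (K : Finset (Finset α)) : Prop :=
  ∀ S : Finset α, 1 ≤ S.card → S.card ≤ t → (uDeg K S : ℝ) ≤ d ^ (t - S.card)

/-- `S` is saturated by `K`: `d_K(S) = ⌊d^(t-|S|)⌋`. -/
def Saturated {α : Type} [DecidableEq α] (t : ℕ) (d : ℝ) (K : Finset (Finset α))
    (S : Finset α) : Prop :=
  uDeg K S = ⌊d ^ (t - S.card)⌋₊

/-- `S` is admissible: no nonempty subset of `S` is saturated. -/
def Admissible {α : Type} [DecidableEq α] (t : ℕ) (d : ℝ) (K : Finset (Finset α))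
    (S : Finset α) : Prop :=
  ∀ S' ⊆ S, S'.Nonempty → ¬ Saturated t d K S'

/-- `Z_K(S)`: the vertices `v` such that `S ∪ {v}` is inadmissible and `{v}` is not
saturated. -/
noncomputable def Zset {α : Type} [DecidableEq α] (t : ℕ) (d : ℝ) (K : Finset (Finset α))
    (S : Finset α) : Finset α :=
  (vertexSet K).filter fun v => ¬ Admissible t d K (insert v S) ∧ ¬ Saturated t d K {v}

/-- `ex(G,H)`: the maximum number of edges of an `H`-free subgraph of `G`. -/
noncomputable def exIn {α : Type} [DecidableEq α] (H : Finset (Finset α))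
    (G : Finset (Finset ℕ)) : ℕ :=
  (G.powerset.filter (HFree H)).sup Finset.card

/-- The probability, in the random `k`-graph `G^(k)(n,p)` (each `k`-subset of `[n]` is an
edge independently with probability `p`), of the event `A`. -/
noncomputable def probEvent (k n : ℕ) (p : ℝ) (A : Finset (Finset ℕ) → Prop) : ℝ :=
  ∑ G ∈ ((vtx n).powersetCard k).powerset.filter A,
    p ^ G.card * (1 - p) ^ (((vtx n).powersetCard k).card - G.card)


/-! ### Part 1: tree embedding -/

/-- `P` is a set of labelled flags `(x, D, B)`; every small subset of a flag base `B`
extends, with any label in `Q`, to a flag avoiding any given small set. -/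
def StrongP (V : Finset ℕ) (ℓ s : ℕ) (Q : Finset ℕ)
    (P : Finset (ℕ × Finset ℕ × Finset ℕ)) : Prop :=
  ∀ q ∈ P, ∀ A ⊆ q.2.2, A.card ≤ ℓ → ∀ x ∈ Q, ∀ T ⊆ V, T.card ≤ s →
    ∃ q' ∈ P, q'.1 = x ∧ A ⊆ q'.2.2 ∧ q'.2.1 ∩ T ⊆ A

theorem exists_bij {α : Type} [DecidableEq α] (N N1 : Finset α) (Y Y1 : Finset ℕ)
    (hN : N1 ⊆ N) (hY : Y1 ⊆ Y) (hc : N.card = Y.card) (hc1 : N1.card ≤ Y1.card) :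
    ∃ f : α → ℕ, Set.InjOn f ↑N ∧ N.image f = Y ∧ N1.image f ⊆ Y1 := by
  obtain ⟨Y2, hY2, hY2c⟩ := Finset.exists_subset_card_eq hc1
  have e1 : N1.card = Y2.card := hY2c.symm
  have hY2' : Y2 ⊆ Y := hY2.trans hY
  have e2 : (N \ N1).card = (Y \ Y2).card := by
    rw [Finset.card_sdiff_of_subset hN, Finset.card_sdiff_of_subset hY2', hc, e1]
  let g1 := Finset.equivOfCardEq e1
  let g2 := Finset.equivOfCardEq e2
  let f : α → ℕ := fun v => if h : v ∈ N1 then g1 ⟨v, h⟩ else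
    if h' : v ∈ N \ N1 then g2 ⟨v, h'⟩ else 0
  have f1 : ∀ v (h : v ∈ N1), f v = g1 ⟨v, h⟩ := fun v h => by simp [f, h]
  have f2 : ∀ v (h : v ∈ N \ N1), f v = g2 ⟨v, h⟩ := fun v h => by
    have h0 : v ∉ N1 := (Finset.mem_sdiff.1 h).2
    have h1 : v ∈ N := (Finset.mem_sdiff.1 h).1
    simp [f, h0, h1]
  have hinj : Set.InjOn f ↑N := by
    intro u hu v hv huv
    have hu : u ∈ N := hu
    have hv : v ∈ N := hv
    by_cases h1 : u ∈ N1 <;> by_cases h2 : v ∈ N1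
    · rw [f1 u h1, f1 v h2] at huv
      have := g1.injective (Subtype.ext huv)
      exact congrArg Subtype.val this
    · rw [f1 u h1, f2 v (by simp [hv, h2])] at huv
      have a1 := (g1 ⟨u, h1⟩).2
      have a2 := (g2 ⟨v, by simp [hv, h2]⟩).2
      rw [huv] at a1
      exact absurd a1 (Finset.mem_sdiff.1 a2).2
    · rw [f2 u (by simp [hu, h1]), f1 v h2] at huv
      have a1 := (g1 ⟨v, h2⟩).2
      have a2 := (g2 ⟨u, by simp [hu, h1]⟩).2
      rw [← huv] at a1
      exact absurd a1 (Finset.mem_sdiff.1 a2).2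
    · rw [f2 u (by simp [hu, h1]), f2 v (by simp [hv, h2])] at huv
      have := g2.injective (Subtype.ext huv)
      exact congrArg Subtype.val this
  refine ⟨f, hinj, ?_, ?_⟩
  · apply Finset.eq_of_subset_of_card_le
    · intro y hy
      obtain ⟨v, hv, rfl⟩ := Finset.mem_image.1 hy
      by_cases h1 : v ∈ N1
      · rw [f1 v h1]; exact hY2' (g1 ⟨v, h1⟩).2
      · rw [f2 v (by simp [hv, h1])]
        exact (Finset.mem_sdiff.1 (g2 ⟨v, by simp [hv, h1]⟩).2).1
    · rw [Finset.card_image_of_injOn hinj, hc]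
  · intro y hy
    obtain ⟨v, hv, rfl⟩ := Finset.mem_image.1 hy
    rw [f1 v hv]; exact hY2 (g1 ⟨v, hv⟩).2

theorem ext_step {α : Type} [DecidableEq α] (W U M : Finset α) (φ : α → ℕ)
    (hφ : Set.InjOn φ ↑W) (D B : Finset ℕ) (hB : B ⊆ D) (hc : U.card = D.card)
    (hm : (U ∩ M).card ≤ B.card) (hIM : U ∩ W ⊆ M) (hA : (U ∩ W).image φ ⊆ B)
    (hav : D ∩ W.image φ ⊆ (U ∩ W).image φ) :
    ∃ φ' : α → ℕ, (∀ v ∈ W, φ' v = φ v) ∧ Set.InjOn φ' ↑(W ∪ U) ∧ U.image φ' = D ∧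
      (U ∩ M).image φ' ⊆ B := by
  have hAc : ((U ∩ W).image φ).card = (U ∩ W).card :=
    Finset.card_image_of_injOn (hφ.mono (by intro x hx; simp at hx; exact hx.2))
  have c1 : (U \ W).card = (D \ (U ∩ W).image φ).card := by
    have h1 := Finset.card_sdiff_add_card_inter U W
    have h2 := Finset.card_sdiff_add_card_eq_card (hA.trans hB)
    omega
  have c2 : ((U \ W) ∩ M).card ≤ (B \ (U ∩ W).image φ).card := by
    have h1 : ((U \ W) ∩ M).card + (U ∩ W).card = (U ∩ M).card := by
      rw [← Finset.card_union_of_disjoint]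
      · congr 1
        ext v; simp only [Finset.mem_union, Finset.mem_inter, Finset.mem_sdiff]
        have : v ∈ U ∩ W → v ∈ M := fun h => hIM h
        simp only [Finset.mem_inter] at this
        tauto
      · rw [Finset.disjoint_left]; intro v; simp; tauto
    have h2 := Finset.card_sdiff_add_card_eq_card hA
    omega
  obtain ⟨g, hg, hgi, hgm⟩ := exists_bij (U \ W) ((U \ W) ∩ M) (D \ (U ∩ W).image φ)
    (B \ (U ∩ W).image φ) Finset.inter_subset_left
    (Finset.sdiff_subset_sdiff hB (le_refl _)) c1 c2
  let φ' : α → ℕ := fun v => if v ∈ W then φ v else g v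
  have p1 : ∀ v ∈ W, φ' v = φ v := fun v h => by simp [φ', h]
  have p2 : ∀ v ∉ W, φ' v = g v := fun v h => by simp [φ', h]
  have gD : ∀ v ∈ U, v ∉ W → g v ∈ D ∧ g v ∉ (U ∩ W).image φ := by
    intro v h1 h2
    have : g v ∈ (U \ W).image g := Finset.mem_image_of_mem _ (by simp [h1, h2])
    rw [hgi] at this
    exact Finset.mem_sdiff.1 this
  have gW : ∀ v ∈ U, v ∉ W → g v ∉ W.image φ := by
    intro v h1 h2 h3
    exact (gD v h1 h2).2 (hav (Finset.mem_inter.2 ⟨(gD v h1 h2).1, h3⟩))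
  refine ⟨φ', p1, ?_, ?_, ?_⟩
  · intro u hu v hv huv
    have hu : u ∈ W ∪ U := hu
    have hv : v ∈ W ∪ U := hv
    rw [Finset.mem_union] at hu hv
    by_cases h1 : u ∈ W <;> by_cases h2 : v ∈ W
    · rw [p1 u h1, p1 v h2] at huv; exact hφ h1 h2 huv
    · rw [p1 u h1, p2 v h2] at huv
      exact absurd (huv ▸ Finset.mem_image_of_mem φ h1) (gW v (by tauto) h2)
    · rw [p2 u h1, p1 v h2] at huv
      exact absurd (huv ▸ Finset.mem_image_of_mem φ h2) (gW u (by tauto) h1)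
    · rw [p2 u h1, p2 v h2] at huv
      exact hg (by simp; tauto) (by simp; tauto) huv
  · ext y
    simp only [Finset.mem_image]
    constructor
    · rintro ⟨v, hv, rfl⟩
      by_cases h : v ∈ W
      · rw [p1 v h]; exact hB (hA (Finset.mem_image_of_mem _ (by simp [hv, h])))
      · rw [p2 v h]; exact (gD v hv h).1
    · intro hy
      by_cases h : y ∈ (U ∩ W).image φ
      · obtain ⟨v, hv, rfl⟩ := Finset.mem_image.1 h
        rw [Finset.mem_inter] at hv
        exact ⟨v, hv.1, p1 v hv.2⟩
      · have : y ∈ (U \ W).image g := by rw [hgi]; exact Finset.mem_sdiff.2 ⟨hy, h⟩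
        obtain ⟨v, hv, rfl⟩ := Finset.mem_image.1 this
        rw [Finset.mem_sdiff] at hv
        exact ⟨v, hv.1, p2 v hv.2⟩
  · intro y hy
    obtain ⟨v, hv, rfl⟩ := Finset.mem_image.1 hy
    rw [Finset.mem_inter] at hv
    by_cases h : v ∈ W
    · rw [p1 v h]; exact hA (Finset.mem_image_of_mem _ (by simp [hv.1, h]))
    · rw [p2 v h]
      exact (Finset.mem_sdiff.1 (hgm (Finset.mem_image_of_mem g (by simp [hv.1, hv.2, h])))).1

theorem vertexSet_insert {α : Type} [DecidableEq α] (E : Finset α) (H : Finset (Finset α)) :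
    vertexSet (insert E H) = E ∪ vertexSet H := by
  simp [vertexSet]

theorem subset_vertexSet {α : Type} [DecidableEq α] {E : Finset α} {H : Finset (Finset α)}
    (h : E ∈ H) : E ⊆ vertexSet H := Finset.le_sup (f := id) h

theorem tree_embed {α : Type} [DecidableEq α] (V : Finset ℕ) (ℓ s d m : ℕ) (S0 M : Finset α)
    (lab : Finset α → ℕ) (Q : Finset ℕ) (P : Finset (ℕ × Finset ℕ × Finset ℕ))
    (hP : ∀ q ∈ P, q.2.1 ⊆ V ∧ q.2.2 ⊆ q.2.1 ∧ q.2.1.card = d ∧ m ≤ q.2.2.card)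
    (hs : StrongP V ℓ s Q P) (hne : P.Nonempty) (H : Finset (Finset α)) (hH : IsHypertree H) :
    (∀ E ∈ H, (E \ S0).card = d ∧ ((E \ S0) ∩ M).card ≤ m ∧ lab E ∈ Q) →
    (∀ E ∈ H, ∀ F ∈ H, E ≠ F → (E ∩ F).card ≤ ℓ ∧ (E ∩ F) \ S0 ⊆ M) →
    (vertexSet H).card ≤ s →
    ∃ φ : α → ℕ, Set.InjOn φ ↑(vertexSet H \ S0) ∧
      ∀ E ∈ H, ∃ q ∈ P, q.1 = lab E ∧ (E \ S0).image φ = q.2.1 ∧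
        ((E \ S0) ∩ M).image φ ⊆ q.2.2 := by
  induction hH with
  | single E =>
    intro h1 h2 h3
    obtain ⟨e1, e2, e3⟩ := h1 E (by simp)
    obtain ⟨q0, hq0⟩ := hne
    obtain ⟨q, hq, hqx, -, -⟩ := hs q0 hq0 ∅ (by simp) (by simp) _ e3 ∅ (by simp) (by simp)
    obtain ⟨b1, b2, b3, b4⟩ := hP q hq
    obtain ⟨φ, -, hi, him, hM⟩ := ext_step ∅ (E \ S0) M (fun _ => 0) (by simp) q.2.1 q.2.2 b2
      (by omega) (by omega) (by simp) (by simp) (by simp)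
    refine ⟨φ, by simpa [vertexSet] using hi, ?_⟩
    intro E' hE'
    rw [Finset.mem_singleton] at hE'
    subst hE'
    exact ⟨q, hq, hqx, him, hM⟩
  | @grow H E F hH hE hF hint ih =>
    intro h1 h2 h3
    rw [vertexSet_insert] at h3
    obtain ⟨φ, hφ, hφE⟩ := ih (fun E' h => h1 E' (by simp [h]))
      (fun E' h F' h' => h2 E' (by simp [h]) F' (by simp [h']))
      (le_trans (Finset.card_le_card Finset.subset_union_right) h3)
    obtain ⟨e1, e2, e3⟩ := h1 E (by simp)
    have hEF : E ≠ F := fun h => hE (h ▸ hF)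
    obtain ⟨f1, f2⟩ := h2 E (by simp) F (by simp [hF]) hEF
    obtain ⟨qF, hqF, -, -, hqFM⟩ := hφE F hF
    have hI : (E \ S0) ∩ (vertexSet H \ S0) = (E ∩ F) \ S0 := by
      rw [← hint]; ext v; simp; tauto
    have hAq : ((E \ S0) ∩ (vertexSet H \ S0)).image φ ⊆ qF.2.2 := by
      refine (Finset.image_subset_image ?_).trans hqFM
      rw [hI]
      intro v hv
      have := f2 hv
      simp at hv ⊢
      tauto
    have hAl : (((E \ S0) ∩ (vertexSet H \ S0)).image φ).card ≤ ℓ := by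
      refine le_trans Finset.card_image_le ?_
      rw [hI]
      exact le_trans (Finset.card_le_card Finset.sdiff_subset) f1
    obtain ⟨q, hq, hqx, hqA, hqT⟩ := hs qF hqF _ hAq hAl _ e3
      ((vertexSet H \ S0).image φ ∩ V) Finset.inter_subset_right (by
        refine le_trans (Finset.card_le_card Finset.inter_subset_left) ?_
        refine le_trans Finset.card_image_le (le_trans (Finset.card_le_card ?_) h3)
        intro v; simp; tauto)
    obtain ⟨b1, b2, b3, b4⟩ := hP q hq
    obtain ⟨φ', hag, hi, him, hM⟩ := ext_step (vertexSet H \ S0) (E \ S0) M φ hφ q.2.1 q.2.2 b2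
      (by omega) (by omega) (by rw [hI]; exact f2) hqA (by
        intro y hy
        rw [Finset.mem_inter] at hy
        exact hqT (Finset.mem_inter.2 ⟨hy.1, Finset.mem_inter.2 ⟨hy.2, b1 hy.1⟩⟩))
    refine ⟨φ', ?_, ?_⟩
    · rw [vertexSet_insert]
      refine hi.mono ?_
      intro v; simp; tauto
    · intro E' hE'
      rcases Finset.mem_insert.1 hE' with rfl | hE'
      · exact ⟨q, hq, hqx, him, hM⟩
      · obtain ⟨q', hq', g1, g2, g3⟩ := hφE E' hE'
        have hsub := subset_vertexSet hE'
        refine ⟨q', hq', g1, ?_, ?_⟩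
        · rw [← g2]
          apply Finset.image_congr
          intro v hv
          apply hag
          simp at hv ⊢
          exact ⟨hsub hv.1, hv.2⟩
        · refine subset_trans (Eq.subset ?_) g3
          apply Finset.image_congr
          intro v hv
          apply hag
          simp at hv ⊢
          exact ⟨hsub hv.1.1, hv.1.2⟩

/-! ### Part 2: peeling and encoding -/

/-- Lists over `S` of length at most `m`. -/
noncomputable def listsLE {β : Type} (S : Finset β) : ℕ → Finset (List β)
  | 0 => {[]}
  | m + 1 => insert [] ((S ×ˢ listsLE S m).image fun q => q.1 :: q.2)

theorem mem_listsLE {β : Type} (S : Finset β) : ∀ (m : ℕ) (w : List β),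
    (∀ t ∈ w, t ∈ S) → w.length ≤ m → w ∈ listsLE S m
  | 0, w, _, h => by
    have : w = [] := List.length_eq_zero_iff.1 (Nat.le_zero.1 h)
    simp [listsLE, this]
  | m + 1, [], _, _ => by simp [listsLE]
  | m + 1, a :: w, h1, h2 => by
    have := mem_listsLE S m w (fun t ht => h1 t (by simp [ht])) (by simpa using h2)
    simp only [listsLE, Finset.mem_insert, Finset.mem_image, Finset.mem_product]
    right
    exact ⟨(a, w), ⟨h1 a (by simp), this⟩, rfl⟩

theorem of_mem_listsLE {β : Type} (S : Finset β) : ∀ (m : ℕ) (w : List β),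
    w ∈ listsLE S m → ∀ t ∈ w, t ∈ S
  | 0, w, h, t, ht => by
    simp only [listsLE, Finset.mem_singleton] at h
    subst h; simp at ht
  | m + 1, w, h, t, ht => by
    simp only [listsLE, Finset.mem_insert, Finset.mem_image, Finset.mem_product] at h
    rcases h with rfl | ⟨⟨a, w'⟩, ⟨h1, h2⟩, rfl⟩
    · simp at ht
    · rcases List.mem_cons.1 ht with rfl | ht
      · exact h1
      · exact of_mem_listsLE S m w' h2 t ht

theorem card_listsLE {β : Type} (S : Finset β) : ∀ m : ℕ,
    (listsLE S m).card ≤ (S.card + 1) ^ m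
  | 0 => by simp [listsLE]
  | m + 1 => by
    have ih := card_listsLE S m
    have h1 : (listsLE S (m + 1)).card ≤ S.card * (listsLE S m).card + 1 := by
      rw [listsLE]
      refine le_trans (Finset.card_insert_le _ _) ?_
      refine Nat.add_le_add_right (le_trans Finset.card_image_le ?_) 1
      rw [Finset.card_product]
    have h2 : 1 ≤ (S.card + 1) ^ m := Nat.one_le_pow _ _ (by omega)
    calc _ ≤ _ := h1
      _ ≤ S.card * (S.card + 1) ^ m + (S.card + 1) ^ m :=
        Nat.add_le_add (Nat.mul_le_mul_left _ ih) h2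
      _ = _ := by ring

/-- First entry of `w` whose key is contained in `B`. -/
noncomputable def firstIn (w : List (Finset ℕ × ℕ × Finset ℕ)) (B : Finset ℕ) :
    Option (Finset ℕ × ℕ × Finset ℕ) := w.find? (fun t => decide (t.1 ⊆ B))

/-- The set attached by `w` to the key `A`. -/
noncomputable def setOf' (w : List (Finset ℕ × ℕ × Finset ℕ)) (A : Finset ℕ) : Finset ℕ :=
  ((w.find? (fun t => decide (t.1 = A))).map fun t => t.2.2).getD ∅

theorem setOf'_eq (w : List (Finset ℕ × ℕ × Finset ℕ)) (B : Finset ℕ)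
    (t : Finset ℕ × ℕ × Finset ℕ) (h : firstIn w B = some t) : setOf' w t.1 = t.2.2 := by
  have : w.find? (fun t' => decide (t'.1 = t.1)) = some t := by
    induction w with
    | nil => simp [firstIn] at h
    | cons a w ih =>
      simp only [firstIn, List.find?_cons] at h ih ⊢
      by_cases ha : a.1 ⊆ B
      · simp only [ha, decide_true, Option.some.injEq] at h
        subst h; simp
      · simp only [ha, decide_false] at h
        have hB : t.1 ⊆ B := by simpa using List.find?_some h
        have : a.1 ≠ t.1 := fun e => ha (e ▸ hB)
        simp only [this, decide_false]
        exact ih h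
  simp [setOf', this]

theorem firstIn_mem {w : List (Finset ℕ × ℕ × Finset ℕ)} {B : Finset ℕ}
    {t : Finset ℕ × ℕ × Finset ℕ} (h : firstIn w B = some t) : t ∈ w ∧ t.1 ⊆ B :=
  ⟨List.mem_of_find?_eq_some h, by simpa using List.find?_some h⟩

theorem setOf'_prop (w : List (Finset ℕ × ℕ × Finset ℕ)) (V : Finset ℕ) (s : ℕ)
    (h : ∀ t ∈ w, t.2.2 ⊆ V ∧ t.2.2.card ≤ s) (A : Finset ℕ) :
    setOf' w A ⊆ V ∧ (setOf' w A).card ≤ s := by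
  unfold setOf'
  cases hf : w.find? (fun t => decide (t.1 = A)) with
  | none => simp
  | some t => simpa using h t (List.mem_of_find?_eq_some hf)

theorem peel (V : Finset ℕ) (ℓ s : ℕ) (Q : Finset ℕ) (N : ℕ) :
    ∀ (P : Finset (ℕ × Finset ℕ × Finset ℕ)), P.card ≤ N →
    (∀ P' ⊆ P, P'.Nonempty → ¬ StrongP V ℓ s Q P') →
    ∃ w : List (Finset ℕ × ℕ × Finset ℕ),
      (w.map Prod.fst).Nodup ∧
      (∀ t ∈ w, (∃ q ∈ P, t.1 ⊆ q.2.2) ∧ t.1.card ≤ ℓ ∧ t.2.1 ∈ Q ∧ t.2.2 ⊆ V ∧ t.2.2.card ≤ s) ∧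
      ∀ q ∈ P, ∃ t, firstIn w q.2.2 = some t ∧ (t.2.1 = q.1 → ¬ (q.2.1 ∩ t.2.2 ⊆ t.1)) := by
  induction N with
  | zero =>
    intro P hc _
    have : P = ∅ := Finset.card_eq_zero.1 (Nat.le_zero.1 hc)
    subst this
    exact ⟨[], by simp, by simp, by simp⟩
  | succ N ih =>
    intro P hc hno
    rcases P.eq_empty_or_nonempty with rfl | hne
    · exact ⟨[], by simp, by simp, by simp⟩
    have hns := hno P (le_refl _) hne
    unfold StrongP at hns
    push Not at hns
    obtain ⟨q0, hq0, A, hA, hAl, x, hx, T, hTV, hTs, hT⟩ := hns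
    let P' := P.filter fun q => ¬ A ⊆ q.2.2
    have hP' : P' ⊆ P := Finset.filter_subset _ _
    have hlt : P'.card < P.card := by
      apply Finset.card_lt_card
      refine Finset.ssubset_iff_of_subset hP' |>.2 ⟨q0, hq0, ?_⟩
      simp [P', hA]
    obtain ⟨w, hw1, hw2, hw3⟩ := ih P' (by omega) (fun P'' h => hno P'' (h.trans hP'))
    refine ⟨(A, x, T) :: w, ?_, ?_, ?_⟩
    · rw [List.map_cons, List.nodup_cons]
      refine ⟨?_, hw1⟩
      intro hmem
      obtain ⟨t, ht, hte⟩ := List.mem_map.1 hmem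
      obtain ⟨⟨q, hq, hqt⟩, -⟩ := hw2 t ht
      simp only at hte
      rw [hte] at hqt
      exact (Finset.mem_filter.1 hq).2 hqt
    · intro t ht
      rcases List.mem_cons.1 ht with rfl | ht
      · exact ⟨⟨q0, hq0, hA⟩, hAl, hx, hTV, hTs⟩
      · obtain ⟨⟨q, hq, hqt⟩, hr⟩ := hw2 t ht
        exact ⟨⟨q, hP' hq, hqt⟩, hr⟩
    · intro q hq
      by_cases hAq : A ⊆ q.2.2
      · refine ⟨(A, x, T), by simp [firstIn, hAq], ?_⟩
        intro hxq
        exact hT q hq hxq.symm hAq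
      · obtain ⟨t, ht, hr⟩ := hw3 q (Finset.mem_filter.2 ⟨hq, hAq⟩)
        refine ⟨t, ?_, hr⟩
        simp only [firstIn] at ht ⊢
        simp [hAq, ht]

/-- Encoded peeling: alphabet. -/
noncomputable def alph (n ℓ s : ℕ) : Finset (Finset ℕ × ℕ × Finset ℕ) :=
  ((vtx n).powerset.filter fun A => A.card ≤ ℓ) ×ˢ (Finset.range (n + 1) ×ˢ
    ((vtx n).powerset.filter fun A => A.card ≤ s))

/-- All codes. -/
noncomputable def codes (n ℓ s : ℕ) : Finset (List (Finset ℕ × ℕ × Finset ℕ)) :=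
  listsLE (alph n ℓ s) ((n + 1) ^ ℓ)

theorem card_small (n ℓ : ℕ) :
    ((vtx n).powerset.filter fun A => A.card ≤ ℓ).card ≤ (n + 1) ^ ℓ := by
  induction ℓ with
  | zero =>
    have : ((vtx n).powerset.filter fun A => A.card ≤ 0) ⊆ {∅} := by
      intro A hA; simp at hA ⊢; exact hA.2
    simpa using Finset.card_le_card this
  | succ ℓ ih =>
    have hsub : ((vtx n).powerset.filter fun A => A.card ≤ ℓ + 1) ⊆
        (((vtx n).powerset.filter fun A => A.card ≤ ℓ) ×ˢ Finset.range (n + 1)).image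
          (fun q => if q.2 = 0 then q.1 else insert q.2 q.1) := by
      intro A hA
      simp only [Finset.mem_filter, Finset.mem_powerset, Finset.mem_image, Finset.mem_product,
        Finset.mem_range, Prod.exists] at hA ⊢
      rcases A.eq_empty_or_nonempty with rfl | ⟨a, ha⟩
      · exact ⟨∅, 0, by simp, by simp⟩
      · refine ⟨A.erase a, a, ⟨⟨(Finset.erase_subset _ _).trans hA.1, ?_⟩, ?_⟩, ?_⟩
        · rw [Finset.card_erase_of_mem ha]; omega
        · have := hA.1 ha
          simp [vtx] at this; omega
        · have := hA.1 ha
          have h0 : a ≠ 0 := by simp [vtx] at this; omega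
          simp [h0, Finset.insert_erase ha]
    calc _ ≤ _ := Finset.card_le_card hsub
      _ ≤ _ := Finset.card_image_le
      _ ≤ (n + 1) ^ ℓ * (n + 1) := by
        rw [Finset.card_product, Finset.card_range]; exact Nat.mul_le_mul_right _ ih
      _ = _ := by ring

theorem card_codes (n ℓ s : ℕ) (hn : 1 ≤ n) :
    (codes n ℓ s).card ≤ (n + 1) ^ ((ℓ + s + 2) * (n + 1) ^ ℓ) := by
  have h1 : (alph n ℓ s).card ≤ (n + 1) ^ (ℓ + s + 1) := by
    unfold alph
    rw [Finset.card_product, Finset.card_product, Finset.card_range]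
    calc _ ≤ (n + 1) ^ ℓ * ((n + 1) * (n + 1) ^ s) :=
          Nat.mul_le_mul (card_small n ℓ) (Nat.mul_le_mul_left _ (card_small n s))
      _ = _ := by ring
  have h2 : (alph n ℓ s).card + 1 ≤ (n + 1) ^ (ℓ + s + 2) := by
    have : 1 ≤ (n + 1) ^ (ℓ + s + 1) := Nat.one_le_pow _ _ (by omega)
    calc _ ≤ (n + 1) ^ (ℓ + s + 1) * 2 := by omega
      _ ≤ (n + 1) ^ (ℓ + s + 1) * (n + 1) := Nat.mul_le_mul_left _ (by omega)
      _ = _ := by ring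
  calc _ ≤ _ := card_listsLE _ _
    _ ≤ ((n + 1) ^ (ℓ + s + 2)) ^ ((n + 1) ^ ℓ) := Nat.pow_le_pow_left h2 _
    _ = _ := by rw [← pow_mul]

theorem peel_code (n ℓ s : ℕ) (Q : Finset ℕ) (hQ : Q ⊆ Finset.range (n + 1))
    (P : Finset (ℕ × Finset ℕ × Finset ℕ)) (hP : ∀ q ∈ P, q.2.2 ⊆ vtx n)
    (hno : ∀ P' ⊆ P, P'.Nonempty → ¬ StrongP (vtx n) ℓ s Q P') :
    ∃ w ∈ codes n ℓ s, ∀ q ∈ P, ∃ t, firstIn w q.2.2 = some t ∧ t.2.1 ∈ Q ∧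
      (t.2.1 = q.1 → ¬ (q.2.1 ∩ t.2.2 ⊆ t.1)) := by
  obtain ⟨w, h1, h2, h3⟩ := peel (vtx n) ℓ s Q P.card P le_rfl hno
  refine ⟨w, ?_, ?_⟩
  · apply mem_listsLE
    · intro t ht
      obtain ⟨⟨q, hq, hqt⟩, a1, a2, a3, a4⟩ := h2 t ht
      simp only [alph, Finset.mem_product, Finset.mem_filter, Finset.mem_powerset]
      exact ⟨⟨hqt.trans (hP q hq), a1⟩, hQ a2, a3, a4⟩
    · rw [← List.length_map (f := Prod.fst), ← List.toFinset_card_of_nodup h1]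
      refine le_trans (Finset.card_le_card ?_) (card_small n ℓ)
      intro A hA
      rw [List.mem_toFinset, List.mem_map] at hA
      obtain ⟨t, ht, rfl⟩ := hA
      obtain ⟨⟨q, hq, hqt⟩, a1, -⟩ := h2 t ht
      simp only [Finset.mem_filter, Finset.mem_powerset]
      exact ⟨hqt.trans (hP q hq), a1⟩
  · intro q hq
    obtain ⟨t, ht, hr⟩ := h3 q hq
    exact ⟨t, ht, (h2 t (firstIn_mem ht).1).2.2.1, hr⟩

theorem code_set (n ℓ s : ℕ) (w) (hw : w ∈ codes n ℓ s) (A : Finset ℕ) :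
    setOf' w A ⊆ vtx n ∧ (setOf' w A).card ≤ s := by
  apply setOf'_prop
  intro t ht
  have := of_mem_listsLE _ _ w hw t ht
  simp only [alph, Finset.mem_product, Finset.mem_filter, Finset.mem_powerset] at this
  exact this.2.2

theorem code_key (n ℓ s : ℕ) (w) (hw : w ∈ codes n ℓ s) (t) (ht : t ∈ w) : t.1.card ≤ ℓ := by
  have := of_mem_listsLE _ _ w hw t ht
  simp only [alph, Finset.mem_product, Finset.mem_filter, Finset.mem_powerset] at this
  exact this.1.2

/-! ### Part 3: `H`-free families have no strong flag systems -/

theorem not_hfree {α : Type} [DecidableEq α] (H : Finset (Finset α)) (F : Finset (Finset ℕ))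
    (φ : α → ℕ) (h1 : Set.InjOn φ ↑(vertexSet H)) (h2 : ∀ E ∈ H, E.image φ ∈ F) :
    ¬ HFree H F := by
  intro h
  refine h (H.image fun E => E.image φ) ?_ ⟨φ, h1, rfl⟩
  intro K hK
  obtain ⟨E, hE, rfl⟩ := Finset.mem_image.1 hK
  exact h2 E hE

theorem no_strong1 {α : Type} [DecidableEq α] (k ℓ n : ℕ)
    (H : Finset (Finset α)) (hH : IsKTree k H) (h2 : TwoContractible H)
    (hov : Overlapping ℓ H) (F : Finset (Finset ℕ)) (hF : HFree H F)
    (P : Finset (ℕ × Finset ℕ × Finset ℕ)) (hne : P.Nonempty)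
    (hP : ∀ q ∈ P, q.2.1 ∈ F ∧ q.2.1 ⊆ vtx n ∧ q.2.1.card = k ∧ q.2.2 ⊆ q.2.1 ∧
      q.2.2.card = k - 2) :
    ¬ StrongP (vtx n) ℓ (vertexSet H).card {0} P := by
  intro hs
  obtain ⟨φ, hφ, hE⟩ := tree_embed (vtx n) ℓ (vertexSet H).card k (k - 2) ∅
    ((vertexSet H).filter fun v => vdeg H v ≠ 1) (fun _ => 0) {0} P
    (fun q hq => by
      obtain ⟨_, a, b, c, d⟩ := hP q hq
      exact ⟨a, c, b, d.ge⟩) hs hne H hH.1 (by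
      intro E hE
      refine ⟨by simpa using hH.2 E hE, ?_, by simp⟩
      have c1 := h2 E hE
      have c2 := hH.2 E hE
      have c3 := Finset.card_filter_add_card_filter_not (s := E) (fun v => vdeg H v = 1)
      have c4 : ((E \ ∅) ∩ (vertexSet H).filter fun v => vdeg H v ≠ 1).card ≤
          (E.filter fun v => ¬ vdeg H v = 1).card := by
        apply Finset.card_le_card
        intro v hv
        simp at hv ⊢
        tauto
      omega) (by
      intro E hE E' hE' hne
      refine ⟨hov E hE E' hE' hne, ?_⟩
      intro v hv
      simp only [Finset.sdiff_empty, Finset.mem_inter] at hv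
      simp only [Finset.mem_filter]
      refine ⟨subset_vertexSet hE hv.1, ?_⟩
      intro h1
      unfold vdeg at h1
      obtain ⟨X, hX⟩ := Finset.card_eq_one.1 h1
      have m1 : E ∈ ({X} : Finset (Finset α)) := hX ▸ Finset.mem_filter.2 ⟨hE, hv.1⟩
      have m2 : E' ∈ ({X} : Finset (Finset α)) := hX ▸ Finset.mem_filter.2 ⟨hE', hv.2⟩
      rw [Finset.mem_singleton] at m1 m2
      exact hne (m1.trans m2.symm)) le_rfl
  refine not_hfree H F φ (by simpa using hφ) ?_ hF
  intro E hE'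
  obtain ⟨q, hq, -, a, -⟩ := hE E hE'
  simp only [Finset.sdiff_empty] at a
  rw [a]
  exact (hP q hq).1

theorem no_strong2 {α : Type} [DecidableEq α] (k ℓ n : ℕ)
    (H : Finset (Finset α)) (hH : IsKTree k H)
    (hov : Overlapping ℓ H) (S0 : Finset α) (hS0 : IsCrosscut H S0)
    (F : Finset (Finset ℕ)) (hF : HFree H F) (L Q : Finset ℕ) (hQL : Q ⊆ L)
    (hQ : Q.card = S0.card)
    (P : Finset (ℕ × Finset ℕ × Finset ℕ)) (hne : P.Nonempty)
    (hP : ∀ q ∈ P, insert q.1 q.2.1 ∈ F ∧ q.2.1 ⊆ vtx n ∧ q.2.1.card = k - 1 ∧ q.2.2 = q.2.1 ∧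
      Disjoint q.2.1 L) :
    ¬ StrongP (vtx n) ℓ (vertexSet H).card Q P := by
  intro hs
  obtain ⟨ψ, hψ, hψi, -⟩ := exists_bij S0 ∅ Q ∅ (by simp) (by simp) hQ.symm (by simp)
  have hlab : ∀ E ∈ H, ∃ v ∈ S0, E ∩ S0 = {v} := by
    intro E hE
    obtain ⟨v, hv⟩ := Finset.card_eq_one.1 (hS0 E hE)
    refine ⟨v, ?_, hv⟩
    have : v ∈ E ∩ S0 := by rw [hv]; simp
    exact (Finset.mem_inter.1 this).2
  obtain ⟨φ, hφ, hE⟩ := tree_embed (vtx n) ℓ (vertexSet H).card (k - 1) (k - 1) S0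
    (vertexSet H) (fun E => ∑ v ∈ E ∩ S0, ψ v) Q P
    (fun q hq => by
      obtain ⟨_, a, b, c, d⟩ := hP q hq
      exact ⟨a, c.subset, b, by rw [c, b]⟩) hs hne H hH.1 (by
      intro E hE
      have c1 := hS0 E hE
      have c2 := hH.2 E hE
      have c3 := Finset.card_sdiff_add_card_inter E S0
      have c4 : (E \ S0).card = k - 1 := by omega
      refine ⟨c4, ?_, ?_⟩
      · exact le_trans (Finset.card_le_card Finset.inter_subset_left) c4.le
      · obtain ⟨v, hv, hv'⟩ := hlab E hE
        rw [hv', Finset.sum_singleton, ← hψi]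
        exact Finset.mem_image_of_mem _ hv) (by
      intro E hE E' hE' hne
      refine ⟨hov E hE E' hE' hne, ?_⟩
      intro v hv
      simp only [Finset.mem_sdiff, Finset.mem_inter] at hv
      exact subset_vertexSet hE hv.1.1) le_rfl
  have hout : ∀ v ∈ vertexSet H, v ∉ S0 → φ v ∉ L := by
    intro v hv hvS
    obtain ⟨E, hE', hvE⟩ : ∃ E ∈ H, v ∈ E := by
      simpa [vertexSet, Finset.mem_sup] using hv
    obtain ⟨q, hq, -, a, -⟩ := hE E hE'
    have : φ v ∈ q.2.1 := by
      rw [← a]; exact Finset.mem_image_of_mem _ (Finset.mem_sdiff.2 ⟨hvE, hvS⟩)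
    exact Finset.disjoint_left.1 (hP q hq).2.2.2.2 this
  have hin : ∀ v ∈ S0, ψ v ∈ L := by
    intro v hv
    apply hQL
    rw [← hψi]
    exact Finset.mem_image_of_mem _ hv
  refine not_hfree H F (fun v => if v ∈ S0 then ψ v else φ v) ?_ ?_ hF
  · intro u hu v hv huv
    have hu : u ∈ vertexSet H := hu
    have hv : v ∈ vertexSet H := hv
    by_cases h1 : u ∈ S0 <;> by_cases h2 : v ∈ S0 <;> simp only [h1, h2, if_true, if_false] at huv
    · exact hψ h1 h2 huv
    · exact absurd (huv ▸ hin u h1) (hout v hv h2)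
    · exact absurd (huv ▸ hin v h2) (hout u hu h1)
    · exact hφ (by simp [hu, h1]) (by simp [hv, h2]) huv
  · intro E hE'
    obtain ⟨q, hq, a0, a, -⟩ := hE E hE'
    obtain ⟨v, hv, hv'⟩ := hlab E hE'
    rw [hv', Finset.sum_singleton] at a0
    have : E.image (fun v => if v ∈ S0 then ψ v else φ v) = insert q.1 q.2.1 := by
      rw [← a, a0]
      have hvE : v ∈ E := by
        have : v ∈ E ∩ S0 := by rw [hv']; simp
        exact (Finset.mem_inter.1 this).1
      ext y
      simp only [Finset.mem_image, Finset.mem_insert, Finset.mem_sdiff]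
      constructor
      · rintro ⟨u, hu, rfl⟩
        by_cases h : u ∈ S0
        · have : u ∈ E ∩ S0 := Finset.mem_inter.2 ⟨hu, h⟩
          rw [hv', Finset.mem_singleton] at this
          subst this
          simp [h]
        · right; exact ⟨u, ⟨hu, h⟩, by simp [h]⟩
      · rintro (rfl | ⟨u, ⟨hu, h⟩, rfl⟩)
        · exact ⟨v, hvE, by simp [hv]⟩
        · exact ⟨u, hu, by simp [h]⟩
    rw [this]
    exact (hP q hq).1

/-! ### Part 4: counting the first container -/

theorem card_vtx (n : ℕ) : (vtx n).card = n := by simp [vtx]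

theorem cover_count (n k a b : ℕ) (X : Finset (Finset ℕ)) (f : Finset ℕ → Finset ℕ)
    (g : Finset ℕ → ℕ → Finset ℕ)
    (hf : ∀ E0 ∈ (vtx n).powersetCard (k - 2), (f E0).card ≤ a)
    (hg : ∀ E0 ∈ (vtx n).powersetCard (k - 2), ∀ x, (g E0 x).card ≤ b)
    (hX : ∀ E ∈ X, ∃ E0 ∈ (vtx n).powersetCard (k - 2), ∃ x ∈ f E0, ∃ y ∈ g E0 x,
      E = insert y (insert x E0)) :
    X.card ≤ n ^ (k - 2) * (a * b) := by
  have hsub : X ⊆ ((vtx n).powersetCard (k - 2)).biUnion fun E0 => (f E0).biUnion fun x =>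
      (g E0 x).image fun y => insert y (insert x E0) := by
    intro E hE
    obtain ⟨E0, h0, x, hx, y, hy, rfl⟩ := hX E hE
    simp only [Finset.mem_biUnion, Finset.mem_image]
    exact ⟨E0, h0, x, hx, y, hy, rfl⟩
  refine le_trans (Finset.card_le_card hsub) ?_
  refine le_trans (Finset.card_biUnion_le_card_mul _ _ (a * b) ?_) ?_
  · intro E0 h0
    refine le_trans (Finset.card_biUnion_le_card_mul _ _ b ?_)
      (Nat.mul_le_mul_right _ (hf E0 h0))
    intro x _
    exact le_trans Finset.card_image_le (hg E0 h0 x)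
  · apply Nat.mul_le_mul_right
    rw [Finset.card_powersetCard, card_vtx]
    exact Nat.choose_le_pow n (k - 2)

/-- Iterated popular targets. -/
noncomputable def popT (n m : ℕ) (T : Finset ℕ → Finset ℕ) : ℕ → Finset ℕ → Finset ℕ
  | 0, A => T A
  | i + 1, A => (vtx n).filter fun c =>
      m ≤ ((vtx n).filter fun b => c ∈ popT n m T i (insert b A)).card

theorem card_popT (n m q s : ℕ) (hm : 0 < m) (hmq : n ≤ m * q) (T : Finset ℕ → Finset ℕ)
    (hT : ∀ A, (T A).card ≤ s) : ∀ i A, (popT n m T i A).card ≤ q ^ i * s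
  | 0, A => by simpa [popT] using hT A
  | i + 1, A => by
    have ih := card_popT n m q s hm hmq T hT i
    have h1 : (popT n m T (i + 1) A).card * m ≤
        ∑ c ∈ popT n m T (i + 1) A,
          ((vtx n).filter fun b => c ∈ popT n m T i (insert b A)).card := by
      rw [← smul_eq_mul]
      apply Finset.card_nsmul_le_sum
      intro c hc
      rw [popT, Finset.mem_filter] at hc
      exact hc.2
    have h2 : ∑ c ∈ popT n m T (i + 1) A,
          ((vtx n).filter fun b => c ∈ popT n m T i (insert b A)).card ≤
        ∑ b ∈ vtx n, (popT n m T i (insert b A)).card := by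
      simp_rw [Finset.card_filter]
      rw [Finset.sum_comm]
      apply Finset.sum_le_sum
      intro b _
      rw [← Finset.card_filter]
      apply Finset.card_le_card
      intro c hc
      exact (Finset.mem_filter.1 hc).2
    have h3 : ∑ b ∈ vtx n, (popT n m T i (insert b A)).card ≤ n * (q ^ i * s) := by
      calc _ ≤ ∑ b ∈ vtx n, q ^ i * s := Finset.sum_le_sum fun b _ => ih _
        _ = _ := by rw [Finset.sum_const, card_vtx, smul_eq_mul]
    have h4 : n * (q ^ i * s) ≤ (q ^ (i + 1) * s) * m := by
      calc _ ≤ m * q * (q ^ i * s) := Nat.mul_le_mul_right _ hmq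
        _ = _ := by ring
    exact Nat.le_of_mul_le_mul_right (h1.trans (h2.trans (h3.trans h4))) hm

/-- The set of heavy centres. -/
noncomputable def heavy (n m ℓ : ℕ) (T : Finset ℕ → Finset ℕ) : Finset ℕ :=
  (Finset.range (ℓ + 1)).biUnion fun i => popT n m T i ∅

theorem card_heavy (n m q s ℓ : ℕ) (hm : 0 < m) (hmq : n ≤ m * q) (hq : 0 < q)
    (T : Finset ℕ → Finset ℕ) (hT : ∀ A, (T A).card ≤ s) :
    (heavy n m ℓ T).card ≤ (ℓ + 1) * (q ^ ℓ * s) := by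
  unfold heavy
  have := Finset.card_biUnion_le_card_mul (Finset.range (ℓ + 1)) (fun i => popT n m T i ∅)
    (q ^ ℓ * s) (by
      intro i hi
      refine (card_popT n m q s hm hmq T hT i ∅).trans ?_
      apply Nat.mul_le_mul_right
      apply Nat.pow_le_pow_right hq
      have := Finset.mem_range.1 hi
      omega)
  simpa using this

theorem popT_sub (n m : ℕ) (T : Finset ℕ → Finset ℕ) (hT : ∀ A, T A ⊆ vtx n) :
    ∀ i A, popT n m T i A ⊆ vtx n
  | 0, A => by simpa [popT] using hT A
  | i + 1, A => by rw [popT]; exact Finset.filter_subset _ _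

theorem heavy_sub (n m ℓ : ℕ) (T : Finset ℕ → Finset ℕ) (hT : ∀ A, T A ⊆ vtx n) :
    heavy n m ℓ T ⊆ vtx n := by
  intro x hx
  obtain ⟨i, -, hi⟩ := Finset.mem_biUnion.1 hx
  exact popT_sub n m T hT i ∅ hi

/-- Every flag of `E` sees a rule. -/
def Ruled (k ℓ : ℕ) (T : Finset ℕ → Finset ℕ) (E : Finset ℕ) : Prop :=
  ∀ B ⊆ E, B.card = k - 2 → ∃ A ⊆ B, A.card ≤ ℓ ∧ ∃ y ∈ E, y ∈ T A ∧ y ∉ A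

/-- `E` is determined by `k - 2` of its vertices. -/
def Degen (T : Finset ℕ → Finset ℕ) (E : Finset ℕ) : Prop :=
  ∃ y1 ∈ E, ∃ y2 ∈ E, y1 ≠ y2 ∧ (∃ A ⊆ (E.erase y1).erase y2, y1 ∈ T A) ∧
    ∃ A ⊆ E.erase y2, y2 ∈ T A

/-- Exceptional edges at level `j`. -/
def Excep (n m : ℕ) (T : Finset ℕ → Finset ℕ) (j : ℕ) (E : Finset ℕ) : Prop :=
  ∃ c ∈ E, ∃ b ∈ E, b ≠ c ∧ (∃ A ⊆ (E.erase c).erase b, c ∈ T A) ∧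
    ∃ A ⊆ (E.erase c).erase b, c ∈ popT n m T j (insert b A) ∧ c ∉ popT n m T (j + 1) A

theorem center_of_ruled (k ℓ : ℕ) (hk : 4 ≤ k) (T : Finset ℕ → Finset ℕ) (E : Finset ℕ)
    (hE : E.card = k) (hr : Ruled k ℓ T E) (hd : ¬ Degen T E) :
    ∃ c ∈ E, ∀ b ∈ E, b ≠ c → ∃ A ⊆ (E.erase c).erase b, A.card ≤ ℓ ∧ c ∈ T A := by
  obtain ⟨B, hB, hBc⟩ := Finset.exists_subset_card_eq (s := E) (n := k - 2) (by omega)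
  obtain ⟨A1, hA1, -, c, hcE, hcT, hcA⟩ := hr B hB hBc
  refine ⟨c, hcE, ?_⟩
  intro b hb hbc
  obtain ⟨A, hA, hAl, y, hyE, hyT, hyA⟩ := hr ((E.erase c).erase b)
    ((Finset.erase_subset _ _).trans (Finset.erase_subset _ _)) (by
      rw [Finset.card_erase_of_mem (Finset.mem_erase.2 ⟨hbc, hb⟩), Finset.card_erase_of_mem hcE, hE]
      omega)
  by_cases hyc : y = c
  · subst hyc; exact ⟨A, hA, hAl, hyT⟩
  · exfalso
    apply hd
    refine ⟨y, hyE, c, hcE, hyc, ⟨A, ?_, hyT⟩, A1, ?_, hcT⟩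
    · intro v hv
      have h1 := hA hv
      simp only [Finset.mem_erase] at h1 ⊢
      exact ⟨h1.2.1, fun e => hyA (e ▸ hv), h1.2.2⟩
    · intro v hv
      exact Finset.mem_erase.2 ⟨fun e => hcA (e ▸ hv), hB (hA1 hv)⟩

theorem descent (n m : ℕ) (T : Finset ℕ → Finset ℕ) (E : Finset ℕ) (c : ℕ) (hc : c ∈ E)
    (hb : ∀ b ∈ E, b ≠ c → ∃ A ⊆ (E.erase c).erase b, c ∈ T A) :
    ∀ (a i : ℕ) (A : Finset ℕ), A ⊆ E.erase c → A.card = a → c ∈ popT n m T i A →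
      (∀ j < i + a, ¬ Excep n m T j E) → c ∈ popT n m T (i + a) ∅
  | 0, i, A, _, hA, h, _ => by
    rw [Finset.card_eq_zero] at hA
    subst hA; simpa using h
  | a + 1, i, A, hAE, hA, h, hex => by
    obtain ⟨b, hbA⟩ : A.Nonempty := Finset.card_pos.1 (by omega)
    have hbE := Finset.mem_erase.1 (hAE hbA)
    have hA' : A.erase b ⊆ (E.erase c).erase b := Finset.erase_subset_erase _ hAE
    have hnext : c ∈ popT n m T (i + 1) (A.erase b) := by
      by_contra hcon
      exact hex i (by omega) ⟨c, hc, b, hbE.2, hbE.1, hb b hbE.2 hbE.1, A.erase b, hA',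
        by rwa [Finset.insert_erase hbA], hcon⟩
    have := descent n m T E c hc hb a (i + 1) (A.erase b)
      (hA'.trans (Finset.erase_subset _ _)) (by rw [Finset.card_erase_of_mem hbA]; omega) hnext
      (fun j hj => hex j (by omega))
    rwa [show i + (a + 1) = i + 1 + a by omega]

theorem bad_cases (n m k ℓ : ℕ) (hk : 4 ≤ k) (T : Finset ℕ → Finset ℕ) (E : Finset ℕ)
    (hE : E.card = k) (hr : Ruled k ℓ T E) (hL : (E ∩ heavy n m ℓ T).card ≠ 1) :
    Degen T E ∨ (∃ j < ℓ, Excep n m T j E) ∨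
      ∃ x ∈ E, ∃ y ∈ E, x ≠ y ∧ x ∈ heavy n m ℓ T ∧ y ∈ heavy n m ℓ T := by
  by_contra hcon
  push Not at hcon
  obtain ⟨hd, hex, htwo⟩ := hcon
  obtain ⟨c, hc, hb⟩ := center_of_ruled k ℓ hk T E hE hr hd
  obtain ⟨b, hbE⟩ : (E.erase c).Nonempty :=
    Finset.card_pos.1 (by rw [Finset.card_erase_of_mem hc]; omega)
  obtain ⟨hbc, hbE⟩ := Finset.mem_erase.1 hbE
  obtain ⟨A, hA, hAl, hcA⟩ := hb b hbE hbc
  have hcL : c ∈ heavy n m ℓ T := by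
    have := descent n m T E c hc (fun b h1 h2 => by
      obtain ⟨A, h3, -, h4⟩ := hb b h1 h2
      exact ⟨A, h3, h4⟩) A.card 0 A (hA.trans (Finset.erase_subset _ _)) rfl
      (by simpa [popT] using hcA) (fun j hj => hex j (by omega))
    unfold heavy
    rw [Finset.mem_biUnion]
    exact ⟨0 + A.card, by rw [Finset.mem_range]; omega, this⟩
  apply hL
  rw [Finset.card_eq_one]
  refine ⟨c, ?_⟩
  ext x
  rw [Finset.mem_inter, Finset.mem_singleton]
  constructor
  · rintro ⟨h1, h2⟩
    by_contra hx
    exact htwo x h1 c hc hx h2 hcL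
  · rintro rfl; exact ⟨hc, hcL⟩

theorem card_pow_biUnion (k s : ℕ) (E : Finset ℕ) (hE : E.card ≤ k) (T : Finset ℕ → Finset ℕ)
    (hT : ∀ A, (T A).card ≤ s) : (E.powerset.biUnion T).card ≤ 2 ^ k * s := by
  refine (Finset.card_biUnion_le_card_mul _ _ s fun A _ => hT A).trans ?_
  apply Nat.mul_le_mul_right
  rw [Finset.card_powerset]
  exact Nat.pow_le_pow_right (by norm_num) hE

theorem erase2_mem (n k : ℕ) (E : Finset ℕ) (hE : E ∈ (vtx n).powersetCard k) (x y : ℕ)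
    (hx : x ∈ E) (hy : y ∈ E) (hxy : x ≠ y) :
    (E.erase x).erase y ∈ (vtx n).powersetCard (k - 2) := by
  rw [Finset.mem_powersetCard] at hE ⊢
  refine ⟨((Finset.erase_subset _ _).trans (Finset.erase_subset _ _)).trans hE.1, ?_⟩
  rw [Finset.card_erase_of_mem (Finset.mem_erase.2 ⟨hxy.symm, hy⟩), Finset.card_erase_of_mem hx, hE.2]
  omega

theorem insert_erase2 (E : Finset ℕ) (x y : ℕ)
    (hx : x ∈ E) (hy : y ∈ E) (hxy : x ≠ y) :
    E = insert x (insert y ((E.erase x).erase y)) := by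
  rw [Finset.insert_erase (Finset.mem_erase.2 ⟨hxy.symm, hy⟩), Finset.insert_erase hx]

theorem card_bad1 (n k ℓ s q : ℕ) (hk : 4 ≤ k) (hq : 0 < q) (T : Finset ℕ → Finset ℕ)
    (hT : ∀ A, T A ⊆ vtx n ∧ (T A).card ≤ s) :
    (((vtx n).powersetCard k).filter fun E => Ruled k ℓ T E ∧
      (E ∩ heavy n (n / q + 1) ℓ T).card ≠ 1).card ≤
    n ^ (k - 2) * ((2 ^ k * s) * (2 ^ k * s)) +
    (ℓ * (n ^ (k - 2) * ((2 ^ k * s) * (2 ^ k * (n / q)))) +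
    n ^ (k - 2) * (((ℓ + 1) * (q ^ ℓ * s)) * ((ℓ + 1) * (q ^ ℓ * s)))) := by
  set m := n / q + 1 with hm
  have hmq : n ≤ m * q := by
    have := Nat.lt_div_mul_add (a := n) hq
    rw [hm, add_mul]; omega
  set K := (vtx n).powersetCard k with hK
  have hsub : (K.filter fun E => Ruled k ℓ T E ∧ (E ∩ heavy n m ℓ T).card ≠ 1) ⊆
      (K.filter fun E => Degen T E) ∪
      (((Finset.range ℓ).biUnion fun j => K.filter fun E => Excep n m T j E) ∪
      K.filter fun E => ∃ x ∈ E, ∃ y ∈ E, x ≠ y ∧ x ∈ heavy n m ℓ T ∧ y ∈ heavy n m ℓ T) := by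
    intro E hE
    obtain ⟨hEK, hr, hL⟩ := Finset.mem_filter.1 hE
    have hEc := (Finset.mem_powersetCard.1 hEK).2
    simp only [Finset.mem_union, Finset.mem_biUnion, Finset.mem_filter, Finset.mem_range]
    rcases bad_cases n m k ℓ hk T E hEc hr hL with h | ⟨j, hj, h⟩ | h
    · exact Or.inl ⟨hEK, h⟩
    · exact Or.inr (Or.inl ⟨j, hj, hEK, h⟩)
    · exact Or.inr (Or.inr ⟨hEK, h⟩)
  refine (Finset.card_le_card hsub).trans ?_
  refine (Finset.card_union_le _ _).trans (Nat.add_le_add ?_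
    ((Finset.card_union_le _ _).trans (Nat.add_le_add ?_ ?_)))
  · refine cover_count n k _ _ _ (fun E0 => E0.powerset.biUnion T)
      (fun E0 x => if x ∈ E0 then ∅ else (insert x E0).powerset.biUnion T) ?_ ?_ ?_
    · intro E0 h0
      exact card_pow_biUnion k s E0 (by rw [(Finset.mem_powersetCard.1 h0).2]; omega) T
        fun A => (hT A).2
    · intro E0 h0 x
      split_ifs with h
      · simp
      · exact card_pow_biUnion k s _ (by
          rw [Finset.card_insert_of_notMem h, (Finset.mem_powersetCard.1 h0).2]; omega) T
          fun A => (hT A).2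
    · intro E hE
      obtain ⟨hEK, y1, h1, y2, h2, h12, ⟨A, hA, hAT⟩, A', hA', hAT'⟩ := Finset.mem_filter.1 hE
      refine ⟨(E.erase y1).erase y2, erase2_mem n k E hEK y1 y2 h1 h2 h12, y1, ?_, y2, ?_, ?_⟩
      · simp only [Finset.mem_biUnion, Finset.mem_powerset]
        exact ⟨A, hA, hAT⟩
      · rw [if_neg (by simp)]
        simp only [Finset.mem_biUnion, Finset.mem_powerset]
        refine ⟨A', hA'.trans ?_, hAT'⟩
        intro v hv
        simp only [Finset.mem_insert, Finset.mem_erase] at hv ⊢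
        tauto
      · rw [Finset.insert_comm]
        exact insert_erase2 E y1 y2 h1 h2 h12
  · refine le_trans (Finset.card_biUnion_le_card_mul _ _
      (n ^ (k - 2) * ((2 ^ k * s) * (2 ^ k * (n / q)))) ?_) (by rw [Finset.card_range])
    intro j _
    refine cover_count n k _ _ _ (fun E0 => E0.powerset.biUnion T)
      (fun E0 c => E0.powerset.biUnion fun A => if c ∈ popT n m T (j + 1) A then ∅ else
        (vtx n).filter fun b => c ∈ popT n m T j (insert b A)) ?_ ?_ ?_
    · intro E0 h0
      exact card_pow_biUnion k s E0 (by rw [(Finset.mem_powersetCard.1 h0).2]; omega) T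
        fun A => (hT A).2
    · intro E0 h0 c
      by_cases hcV : c ∈ vtx n
      · refine card_pow_biUnion k _ E0 (by rw [(Finset.mem_powersetCard.1 h0).2]; omega) _ ?_
        intro A
        split_ifs with h
        · simp
        · rw [popT, Finset.mem_filter] at h
          have : ¬ m ≤ _ := fun h' => h ⟨hcV, h'⟩
          omega
      · refine card_pow_biUnion k _ E0 (by rw [(Finset.mem_powersetCard.1 h0).2]; omega) _ ?_
        intro A
        split_ifs with h
        · simp
        · have : ((vtx n).filter fun b => c ∈ popT n m T j (insert b A)) = ∅ := by
            apply Finset.filter_eq_empty_iff.2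
            intro b _ hb
            exact hcV (popT_sub n m T (fun A => (hT A).1) j _ hb)
          rw [this]; simp
    · intro E hE
      obtain ⟨hEK, c, hc, b, hb, hbc, ⟨A, hA, hAT⟩, A', hA', h1, h2⟩ := Finset.mem_filter.1 hE
      refine ⟨(E.erase c).erase b, erase2_mem n k E hEK c b hc hb hbc.symm, c, ?_, b, ?_, ?_⟩
      · simp only [Finset.mem_biUnion, Finset.mem_powerset]
        exact ⟨A, hA, hAT⟩
      · simp only [Finset.mem_biUnion, Finset.mem_powerset]
        refine ⟨A', hA', ?_⟩
        rw [if_neg h2, Finset.mem_filter]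
        exact ⟨(Finset.mem_powersetCard.1 hEK).1 hb, h1⟩
      · rw [Finset.insert_comm]
        exact insert_erase2 E c b hc hb hbc.symm
  · refine cover_count n k _ _ _ (fun _ => heavy n m ℓ T) (fun _ _ => heavy n m ℓ T) ?_ ?_ ?_
    · intro _ _
      exact card_heavy n m q s ℓ (Nat.succ_pos _) hmq hq T fun A => (hT A).2
    · intro _ _ _
      exact card_heavy n m q s ℓ (Nat.succ_pos _) hmq hq T fun A => (hT A).2
    · intro E hE
      obtain ⟨hEK, x, hx, y, hy, hxy, hxL, hyL⟩ := Finset.mem_filter.1 hE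
      refine ⟨(E.erase x).erase y, erase2_mem n k E hEK x y hx hy hxy, x, hxL, y, hyL, ?_⟩
      rw [Finset.insert_comm]
      exact insert_erase2 E x y hx hy hxy

/-! ### Part 5: the containers -/

theorem ruled_of_code {α : Type} [DecidableEq α] (k ℓ n : ℕ)
    (H : Finset (Finset α)) (hH : IsKTree k H) (h2 : TwoContractible H)
    (hov : Overlapping ℓ H) (F : Finset (Finset ℕ)) (hF : HFree H F)
    (hFK : F ⊆ (vtx n).powersetCard k) :
    ∃ w ∈ codes n ℓ (vertexSet H).card, ∀ E ∈ F, Ruled k ℓ (setOf' w) E := by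
  set P : Finset (ℕ × Finset ℕ × Finset ℕ) :=
    F.biUnion fun E => (E.powersetCard (k - 2)).image fun B => (0, E, B) with hP
  have hmem : ∀ q ∈ P, q.2.1 ∈ F ∧ q.2.1 ⊆ vtx n ∧ q.2.1.card = k ∧ q.2.2 ⊆ q.2.1 ∧
      q.2.2.card = k - 2 := by
    intro q hq
    rw [hP, Finset.mem_biUnion] at hq
    obtain ⟨E, hE, hq⟩ := hq
    obtain ⟨B, hB, rfl⟩ := Finset.mem_image.1 hq
    have h1 := Finset.mem_powersetCard.1 (hFK hE)
    have h2 := Finset.mem_powersetCard.1 hB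
    exact ⟨hE, h1.1, h1.2, h2.1, h2.2⟩
  obtain ⟨w, hw, hcode⟩ := peel_code n ℓ (vertexSet H).card {0} (by simp) P
    (fun q hq => (hmem q hq).2.2.2.1.trans (hmem q hq).2.1)
    (fun P' hP' hne => no_strong1 k ℓ n H hH h2 hov F hF P' hne fun q hq => hmem q (hP' hq))
  refine ⟨w, hw, ?_⟩
  intro E hE B hB hBc
  obtain ⟨t, ht, ht0, hr⟩ := hcode (0, E, B) (by
    rw [hP, Finset.mem_biUnion]
    exact ⟨E, hE, Finset.mem_image.2 ⟨B, Finset.mem_powersetCard.2 ⟨hB, hBc⟩, rfl⟩⟩)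
  have hr' := hr (Finset.mem_singleton.1 ht0)
  obtain ⟨y, hy, hyA⟩ := Finset.not_subset.1 hr'
  obtain ⟨hyE, hyT⟩ := Finset.mem_inter.1 hy
  have hm := firstIn_mem ht
  exact ⟨t.1, hm.2, code_key n ℓ _ w hw t hm.1, y, hyE, by rwa [setOf'_eq w B t ht], hyA⟩

/-- The second condition on members of a container. -/
def Labelled (σ : ℕ) (L : Finset ℕ) (W : Finset ℕ → List (Finset ℕ × ℕ × Finset ℕ))
    (E : Finset ℕ) : Prop :=
  ∀ Q ∈ L.powersetCard σ, ∀ x ∈ E ∩ L ∩ Q, ∃ t, firstIn (W Q) (E.erase x) = some t ∧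
    t.2.1 ∈ Q ∧ (t.2.1 = x → ¬ ((E.erase x) ∩ t.2.2 ⊆ t.1))

theorem labelled_of_code {α : Type} [DecidableEq α] (k ℓ n σ : ℕ)
    (H : Finset (Finset α)) (hH : IsKTree k H)
    (hov : Overlapping ℓ H) (hσ : ∃ S0 : Finset α, IsCrosscut H S0 ∧ S0.card = σ)
    (F : Finset (Finset ℕ)) (hF : HFree H F)
    (hFK : F ⊆ (vtx n).powersetCard k) (L : Finset ℕ) (hL : L ⊆ vtx n) :
    ∃ W : Finset ℕ → List (Finset ℕ × ℕ × Finset ℕ),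
      (∀ Q ∈ L.powersetCard σ, W Q ∈ codes n ℓ (vertexSet H).card) ∧
      ∀ E ∈ F, (E ∩ L).card = 1 → Labelled σ L W E := by
  obtain ⟨S0, hS0, hS0c⟩ := hσ
  have key : ∀ Q : Finset ℕ, ∃ w : List (Finset ℕ × ℕ × Finset ℕ), Q ∈ L.powersetCard σ →
      w ∈ codes n ℓ (vertexSet H).card ∧ ∀ E ∈ F, (E ∩ L).card = 1 → ∀ x ∈ E ∩ L ∩ Q,
      ∃ t, firstIn w (E.erase x) = some t ∧
        t.2.1 ∈ Q ∧ (t.2.1 = x → ¬ ((E.erase x) ∩ t.2.2 ⊆ t.1)) := by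
    intro Q
    by_cases hQ : Q ∈ L.powersetCard σ
    swap
    · exact ⟨[], fun h => absurd h hQ⟩
    obtain ⟨hQL, hQc⟩ := Finset.mem_powersetCard.1 hQ
    set P : Finset (ℕ × Finset ℕ × Finset ℕ) :=
      (F.filter fun E => (E ∩ L).card = 1).biUnion fun E =>
        (E ∩ L ∩ Q).image fun x => (x, E.erase x, E.erase x) with hP
    have hmem : ∀ q ∈ P, insert q.1 q.2.1 ∈ F ∧ q.2.1 ⊆ vtx n ∧ q.2.1.card = k - 1 ∧
        q.2.2 = q.2.1 ∧ Disjoint q.2.1 L := by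
      intro q hq
      rw [hP, Finset.mem_biUnion] at hq
      obtain ⟨E, hE, hq⟩ := hq
      obtain ⟨x, hx, rfl⟩ := Finset.mem_image.1 hq
      obtain ⟨hE, h1⟩ := Finset.mem_filter.1 hE
      have hxEL := (Finset.mem_inter.1 hx).1
      have hxE := (Finset.mem_inter.1 hxEL).1
      have h2 := Finset.mem_powersetCard.1 (hFK hE)
      refine ⟨by simpa [Finset.insert_erase hxE] using hE, (Finset.erase_subset _ _).trans h2.1,
        by simp only [Finset.card_erase_of_mem hxE, h2.2], rfl, ?_⟩
      rw [Finset.disjoint_left]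
      intro y hy hyL
      obtain ⟨hyx, hyE⟩ := Finset.mem_erase.1 hy
      exact hyx (Finset.card_le_one.1 h1.le y (Finset.mem_inter.2 ⟨hyE, hyL⟩) x hxEL)
    obtain ⟨w, hw, hcode⟩ := peel_code n ℓ (vertexSet H).card Q (by
        intro x hx
        have := hL (hQL hx)
        simp only [vtx, Finset.mem_Icc] at this
        rw [Finset.mem_range]; omega) P
      (fun q hq => by rw [(hmem q hq).2.2.2.1]; exact (hmem q hq).2.1)
      (fun P' hP' hne => no_strong2 k ℓ n H hH hov S0 hS0 F hF L Q hQL (hQc.trans hS0c.symm)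
        P' hne fun q hq => hmem q (hP' hq))
    refine ⟨w, fun _ => ⟨hw, ?_⟩⟩
    intro E hE h1 x hx
    exact hcode (x, E.erase x, E.erase x) (by
      rw [hP, Finset.mem_biUnion]
      exact ⟨E, Finset.mem_filter.2 ⟨hE, h1⟩, Finset.mem_image.2 ⟨x, hx, rfl⟩⟩)
  choose W hW using key
  exact ⟨W, fun Q hQ => (hW Q hQ).1, fun E hE h1 Q hQ x hx => (hW Q hQ).2 E hE h1 x hx⟩

theorem card_second (n k ℓ s σ b : ℕ) (hk : 4 ≤ k) (L : Finset ℕ) (hLb : L.card ≤ b)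
    (W : Finset ℕ → List (Finset ℕ × ℕ × Finset ℕ))
    (hW : ∀ Q ∈ L.powersetCard σ, W Q ∈ codes n ℓ s) :
    (((vtx n).powersetCard k).filter fun E => ∃ Q ∈ L.powersetCard σ, ∃ x ∈ E ∩ L,
      ∃ t, firstIn (W Q) (E.erase x) = some t ∧ ¬ ((E.erase x) ∩ t.2.2 ⊆ t.1)).card ≤
    n ^ (k - 2) * ((2 ^ b * (2 ^ k * s)) * b) := by
  refine cover_count n k _ _ _ (fun E0 => (L.powersetCard σ).biUnion fun Q =>
    E0.powerset.biUnion (setOf' (W Q))) (fun _ _ => L) ?_ ?_ ?_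
  · intro E0 h0
    refine (Finset.card_biUnion_le_card_mul _ _ (2 ^ k * s) ?_).trans ?_
    · intro Q hQ
      exact card_pow_biUnion k s E0 (by rw [(Finset.mem_powersetCard.1 h0).2]; omega) _
        fun A => (code_set n ℓ s _ (hW Q hQ) A).2
    · apply Nat.mul_le_mul_right
      calc _ ≤ L.powerset.card := Finset.card_le_card fun Q hQ =>
            Finset.mem_powerset.2 (Finset.mem_powersetCard.1 hQ).1
        _ = 2 ^ L.card := Finset.card_powerset _
        _ ≤ _ := Nat.pow_le_pow_right (by norm_num) hLb
  · intro _ _ _; exact hLb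
  · intro E hE
    obtain ⟨hEK, Q, hQ, x, hx, t, ht, hr⟩ := Finset.mem_filter.1 hE
    obtain ⟨y, hy, hyA⟩ := Finset.not_subset.1 hr
    obtain ⟨hyE, hyT⟩ := Finset.mem_inter.1 hy
    obtain ⟨hyx, hyE⟩ := Finset.mem_erase.1 hyE
    obtain ⟨hxE, hxL⟩ := Finset.mem_inter.1 hx
    refine ⟨(E.erase x).erase y, erase2_mem n k E hEK x y hxE hyE hyx.symm, y, ?_, x, hxL,
      insert_erase2 E x y hxE hyE hyx.symm⟩
    rw [Finset.mem_biUnion]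
    refine ⟨Q, hQ, ?_⟩
    rw [Finset.mem_biUnion]
    refine ⟨t.1, ?_, by rwa [setOf'_eq _ _ t ht]⟩
    rw [Finset.mem_powerset]
    intro v hv
    exact Finset.mem_erase.2 ⟨fun e => hyA (e ▸ hv), (firstIn_mem ht).2 hv⟩

theorem card_third (n k σ : ℕ) (hσ : 1 ≤ σ) (L : Finset ℕ)
    (W : Finset ℕ → List (Finset ℕ × ℕ × Finset ℕ)) :
    (((vtx n).powersetCard k).filter fun E => (E ∩ L).card = 1 ∧
      ∀ Q ∈ L.powersetCard σ, ∀ x ∈ E ∩ L ∩ Q, ∃ t, firstIn (W Q) (E.erase x) = some t ∧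
        t.2.1 ∈ Q ∧ t.2.1 ≠ x).card ≤ n.choose (k - 1) * (σ - 1) := by
  set X := ((vtx n).powersetCard k).filter fun E => (E ∩ L).card = 1 ∧
      ∀ Q ∈ L.powersetCard σ, ∀ x ∈ E ∩ L ∩ Q, ∃ t, firstIn (W Q) (E.erase x) = some t ∧
        t.2.1 ∈ Q ∧ t.2.1 ≠ x with hX
  have hsub : X ⊆ ((vtx n).powersetCard (k - 1)).biUnion fun D =>
      (L.filter fun x => x ∉ D ∧ insert x D ∈ X).image fun x => insert x D := by
    intro E hE
    obtain ⟨hEK, h1, -⟩ := Finset.mem_filter.1 hE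
    obtain ⟨x, hx⟩ := Finset.card_eq_one.1 h1
    have hx' : x ∈ E ∩ L := by rw [hx]; simp
    obtain ⟨hxE, hxL⟩ := Finset.mem_inter.1 hx'
    obtain ⟨hEV, hEc⟩ := Finset.mem_powersetCard.1 hEK
    rw [Finset.mem_biUnion]
    refine ⟨E.erase x, Finset.mem_powersetCard.2 ⟨(Finset.erase_subset _ _).trans hEV, ?_⟩, ?_⟩
    · rw [Finset.card_erase_of_mem hxE, hEc]
    · rw [Finset.mem_image]
      exact ⟨x, Finset.mem_filter.2 ⟨hxL, by simp, by rwa [Finset.insert_erase hxE]⟩,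
        Finset.insert_erase hxE⟩
  refine (Finset.card_le_card hsub).trans ?_
  refine (Finset.card_biUnion_le_card_mul _ _ (σ - 1) ?_).trans ?_
  · intro D hD
    refine Finset.card_image_le.trans ?_
    by_contra hcon
    obtain ⟨Q, hQ, hQc⟩ := Finset.exists_subset_card_eq
      (s := L.filter fun x => x ∉ D ∧ insert x D ∈ X) (n := σ) (by omega)
    have hQL : Q ∈ L.powersetCard σ :=
      Finset.mem_powersetCard.2 ⟨hQ.trans (Finset.filter_subset _ _), hQc⟩
    have hlab : ∀ x ∈ Q, ∃ t, firstIn (W Q) D = some t ∧ t.2.1 ∈ Q ∧ t.2.1 ≠ x := by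
      intro x hx
      obtain ⟨hxL, hxD, hxX⟩ := Finset.mem_filter.1 (hQ hx)
      have := (Finset.mem_filter.1 hxX).2.2 Q hQL x (by
        simp only [Finset.mem_inter, Finset.mem_insert, true_or, true_and]
        exact ⟨hxL, hx⟩)
      rwa [Finset.erase_insert hxD] at this
    obtain ⟨x, hx⟩ : Q.Nonempty := Finset.card_pos.1 (by omega)
    obtain ⟨t, ht, htQ, -⟩ := hlab x hx
    obtain ⟨t', ht', -, hne⟩ := hlab t.2.1 htQ
    rw [ht] at ht'
    cases ht'
    exact hne rfl
  · rw [Finset.card_powersetCard, card_vtx]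

/-- The container attached to a pair of codes. -/
noncomputable def container (n k ℓ σ q : ℕ) (w : List (Finset ℕ × ℕ × Finset ℕ))
    (W : Finset ℕ → List (Finset ℕ × ℕ × Finset ℕ)) : Finset (Finset ℕ) :=
  ((vtx n).powersetCard k).filter fun E => Ruled k ℓ (setOf' w) E ∧
    ((E ∩ heavy n (n / q + 1) ℓ (setOf' w)).card = 1 →
      Labelled σ (heavy n (n / q + 1) ℓ (setOf' w)) W E)

theorem card_container (n k ℓ s σ q b : ℕ) (hk : 4 ≤ k) (hq : 0 < q) (hσ : 1 ≤ σ)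
    (w : List (Finset ℕ × ℕ × Finset ℕ)) (hw : w ∈ codes n ℓ s)
    (hb : (heavy n (n / q + 1) ℓ (setOf' w)).card ≤ b)
    (W : Finset ℕ → List (Finset ℕ × ℕ × Finset ℕ))
    (hW : ∀ Q ∈ (heavy n (n / q + 1) ℓ (setOf' w)).powersetCard σ, W Q ∈ codes n ℓ s) :
    (container n k ℓ σ q w W).card ≤
    (n ^ (k - 2) * ((2 ^ k * s) * (2 ^ k * s)) +
    (ℓ * (n ^ (k - 2) * ((2 ^ k * s) * (2 ^ k * (n / q)))) +
    n ^ (k - 2) * (((ℓ + 1) * (q ^ ℓ * s)) * ((ℓ + 1) * (q ^ ℓ * s))))) +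
    (n ^ (k - 2) * ((2 ^ b * (2 ^ k * s)) * b) + n.choose (k - 1) * (σ - 1)) := by
  set L := heavy n (n / q + 1) ℓ (setOf' w) with hL
  refine le_trans (Finset.card_le_card (t := (((vtx n).powersetCard k).filter fun E =>
      Ruled k ℓ (setOf' w) E ∧ (E ∩ L).card ≠ 1) ∪
      ((((vtx n).powersetCard k).filter fun E => ∃ Q ∈ L.powersetCard σ, ∃ x ∈ E ∩ L,
      ∃ t, firstIn (W Q) (E.erase x) = some t ∧ ¬ ((E.erase x) ∩ t.2.2 ⊆ t.1)) ∪
      (((vtx n).powersetCard k).filter fun E => (E ∩ L).card = 1 ∧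
      ∀ Q ∈ L.powersetCard σ, ∀ x ∈ E ∩ L ∩ Q, ∃ t, firstIn (W Q) (E.erase x) = some t ∧
        t.2.1 ∈ Q ∧ t.2.1 ≠ x))) ?_) ?_
  · intro E hE
    obtain ⟨hEK, hr, hlab⟩ := Finset.mem_filter.1 hE
    simp only [Finset.mem_union, Finset.mem_filter]
    by_cases h1 : (E ∩ L).card = 1
    swap
    · exact Or.inl ⟨hEK, hr, h1⟩
    right
    have hlab := hlab h1
    by_cases h3 : ∀ Q ∈ L.powersetCard σ, ∀ x ∈ E ∩ L ∩ Q,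
        ∃ t, firstIn (W Q) (E.erase x) = some t ∧ t.2.1 ∈ Q ∧ t.2.1 ≠ x
    · exact Or.inr ⟨hEK, h1, h3⟩
    left
    push Not at h3
    obtain ⟨Q, hQ, x, hx, h4⟩ := h3
    obtain ⟨t, ht, htQ, hr⟩ := hlab Q hQ x hx
    exact ⟨hEK, Q, hQ, x, (Finset.mem_inter.1 hx).1, t, ht, hr (h4 t ht htQ)⟩
  · refine (Finset.card_union_le _ _).trans (Nat.add_le_add
      (card_bad1 n k ℓ s q hk hq (setOf' w) (code_set n ℓ s w hw))
      ((Finset.card_union_le _ _).trans (Nat.add_le_add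
        (card_second n k ℓ s σ b hk L hb W hW) (card_third n k σ hσ L W))))

/-- The family of all containers. -/
noncomputable def contFam (n k ℓ s σ q : ℕ) : Finset (Finset (Finset ℕ)) :=
  (codes n ℓ s).biUnion fun w =>
    (((heavy n (n / q + 1) ℓ (setOf' w)).powersetCard σ).pi fun _ => codes n ℓ s).image fun g =>
      container n k ℓ σ q w fun Q =>
        if h : Q ∈ (heavy n (n / q + 1) ℓ (setOf' w)).powersetCard σ then g Q h else []

theorem heavy_bound (n ℓ s q : ℕ) (hq : 0 < q) (w) (hw : w ∈ codes n ℓ s) :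
    (heavy n (n / q + 1) ℓ (setOf' w)).card ≤ (ℓ + 1) * (q ^ ℓ * s) := by
  refine card_heavy n (n / q + 1) q s ℓ (Nat.succ_pos _) ?_ hq _
    fun A => (code_set n ℓ s w hw A).2
  have := Nat.lt_div_mul_add (a := n) hq
  rw [add_mul]; omega

theorem card_contFam (n k ℓ s σ q : ℕ) (hn : 1 ≤ n) (hq : 0 < q) :
    (contFam n k ℓ s σ q).card ≤
      (n + 1) ^ ((ℓ + s + 2) * (1 + 2 ^ ((ℓ + 1) * (q ^ ℓ * s))) * (n + 1) ^ ℓ) := by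
  have hc := card_codes n ℓ s hn
  set b := (ℓ + 1) * (q ^ ℓ * s) with hb
  set N := (n + 1) ^ ((ℓ + s + 2) * (n + 1) ^ ℓ) with hN
  have hN1 : 1 ≤ N := Nat.one_le_pow _ _ (by omega)
  refine (Finset.card_biUnion_le_card_mul _ _ (N ^ (2 ^ b)) ?_).trans ?_
  · intro w hw
    refine Finset.card_image_le.trans ?_
    rw [Finset.card_pi, Finset.prod_const]
    refine (Nat.pow_le_pow_left hc _).trans (Nat.pow_le_pow_right hN1 ?_)
    calc _ ≤ (heavy n (n / q + 1) ℓ (setOf' w)).powerset.card :=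
          Finset.card_le_card fun Q hQ =>
            Finset.mem_powerset.2 (Finset.mem_powersetCard.1 hQ).1
      _ = 2 ^ _ := Finset.card_powerset _
      _ ≤ _ := Nat.pow_le_pow_right (by norm_num) (heavy_bound n ℓ s q hq w hw)
  · calc _ ≤ N * N ^ (2 ^ b) := Nat.mul_le_mul_right _ hc
      _ = N ^ (1 + 2 ^ b) := by rw [pow_add, pow_one]
      _ = _ := by rw [hN, ← pow_mul]; congr 1; ring

theorem exists_cont {α : Type} [DecidableEq α] (k ℓ n σ q : ℕ)
    (H : Finset (Finset α)) (hH : IsKTree k H) (h2 : TwoContractible H)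
    (hov : Overlapping ℓ H) (hσ : ∃ S0 : Finset α, IsCrosscut H S0 ∧ S0.card = σ)
    (F : Finset (Finset ℕ)) (hF : HFree H F)
    (hFK : F ⊆ (vtx n).powersetCard k) :
    ∃ C ∈ contFam n k ℓ (vertexSet H).card σ q, F ⊆ C := by
  obtain ⟨w, hw, hr⟩ := ruled_of_code k ℓ n H hH h2 hov F hF hFK
  obtain ⟨W, hW, hlab⟩ := labelled_of_code k ℓ n σ H hH hov hσ F hF hFK
    (heavy n (n / q + 1) ℓ (setOf' w))
    (heavy_sub _ _ _ _ fun A => (code_set n ℓ _ w hw A).1)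
  refine ⟨_, Finset.mem_biUnion.2 ⟨w, hw, Finset.mem_image.2 ⟨fun Q _ => W Q, ?_, rfl⟩⟩, ?_⟩
  · rw [Finset.mem_pi]
    exact fun Q hQ => hW Q hQ
  · intro E hE
    refine Finset.mem_filter.2 ⟨hFK hE, hr E hE, fun h1 Q hQ x hx => ?_⟩
    beta_reduce
    rw [dif_pos hQ]
    exact hlab E hE h1 Q hQ x hx

theorem card_mem_contFam (n k ℓ s σ q : ℕ) (hk : 4 ≤ k) (hq : 0 < q) (hσ : 1 ≤ σ)
    (C) (hC : C ∈ contFam n k ℓ s σ q) : C ⊆ (vtx n).powersetCard k ∧ C.card ≤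
    (n ^ (k - 2) * ((2 ^ k * s) * (2 ^ k * s)) +
    (ℓ * (n ^ (k - 2) * ((2 ^ k * s) * (2 ^ k * (n / q)))) +
    n ^ (k - 2) * (((ℓ + 1) * (q ^ ℓ * s)) * ((ℓ + 1) * (q ^ ℓ * s))))) +
    (n ^ (k - 2) * ((2 ^ ((ℓ + 1) * (q ^ ℓ * s)) * (2 ^ k * s)) * ((ℓ + 1) * (q ^ ℓ * s))) +
      n.choose (k - 1) * (σ - 1)) := by
  obtain ⟨w, hw, hC⟩ := Finset.mem_biUnion.1 hC
  obtain ⟨g, hg, rfl⟩ := Finset.mem_image.1 hC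
  refine ⟨Finset.filter_subset _ _, ?_⟩
  apply card_container n k ℓ s σ q _ hk hq hσ w hw (heavy_bound n ℓ s q hq w hw)
  intro Q hQ
  rw [dif_pos hQ]
  exact Finset.mem_pi.1 hg Q hQ

theorem pow_le_choose' (r n : ℕ) (hn : 2 * r ≤ n) :
    (n : ℝ) ^ r ≤ (2 ^ r * r.factorial : ℝ) * (n.choose r : ℝ) := by
  have h1 : (((n + 1 - r : ℕ) ^ r : ℕ) : ℝ) ≤ (r.factorial : ℝ) * n.choose r := by
    have h3 := Nat.pow_sub_le_descFactorial n r
    rw [Nat.descFactorial_eq_factorial_mul_choose] at h3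
    exact_mod_cast h3
  have h2 : (n : ℝ) ^ r ≤ 2 ^ r * (((n + 1 - r : ℕ) ^ r : ℕ) : ℝ) := by
    push_cast
    rw [← mul_pow]
    apply pow_le_pow_left₀ (by positivity)
    have : n ≤ 2 * (n + 1 - r) := by omega
    exact_mod_cast this
  calc (n : ℝ) ^ r ≤ _ := h2
    _ ≤ 2 ^ r * ((r.factorial : ℝ) * n.choose r) := by gcongr
    _ = _ := by ring

theorem containers {α : Type} [DecidableEq α] (k ℓ : ℕ) (hk : 4 ≤ k)
    (H : Finset (Finset α)) (hH : IsKTree k H) (h2 : TwoContractible H)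
    (hov : Overlapping ℓ H) (σ : ℕ) (hσ1 : 1 ≤ σ)
    (hσ : ∃ S0 : Finset α, IsCrosscut H S0 ∧ S0.card = σ) (δ : ℝ) (hδ : 0 < δ) :
    ∃ M n0 : ℕ, ∀ n ≥ n0, ∃ 𝒞 : Finset (Finset (Finset ℕ)),
      𝒞.card ≤ (n + 1) ^ (M * (n + 1) ^ ℓ) ∧
      (∀ C ∈ 𝒞, C ⊆ (vtx n).powersetCard k ∧
        (C.card : ℝ) ≤ ((σ : ℝ) - 1 + δ) * (n.choose (k - 1) : ℝ)) ∧
      ∀ F ⊆ (vtx n).powersetCard k, HFree H F → ∃ C ∈ 𝒞, F ⊆ C := by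
  set s := (vertexSet H).card with hs
  set c : ℝ := 2 ^ (k - 1) * (k - 1).factorial with hc
  have hc0 : 0 < c := by positivity
  set B : ℝ := (2 ^ k * s) * 2 ^ k with hB
  obtain ⟨q, hq⟩ := exists_nat_gt (2 * (c * ℓ * B) / δ + 1)
  have hB0 : 0 ≤ B := by positivity
  have hq1 : (1 : ℝ) < q := lt_of_le_of_lt (by
    have : 0 ≤ 2 * (c * ℓ * B) / δ := by positivity
    linarith) hq
  have hq0 : 0 < q := by
    have : (0 : ℝ) < q := by linarith
    exact_mod_cast this
  have hqδ : 2 * (c * ℓ * B) ≤ δ * q := by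
    have : 2 * (c * ℓ * B) / δ ≤ q := by linarith
    rwa [div_le_iff₀ hδ, mul_comm (q : ℝ)] at this
  set b := (ℓ + 1) * (q ^ ℓ * s) with hb
  set A : ℕ := (2 ^ k * s) * (2 ^ k * s) + b * b + (2 ^ b * (2 ^ k * s)) * b with hA
  obtain ⟨n1, hn1⟩ := exists_nat_gt (2 * (c * A) / δ)
  refine ⟨(ℓ + s + 2) * (1 + 2 ^ b), n1 + 2 * k + 1, ?_⟩
  intro n hn
  refine ⟨contFam n k ℓ s σ q, card_contFam n k ℓ s σ q (by omega) hq0, ?_,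
    fun F hFK hF => exists_cont k ℓ n σ q H hH h2 hov hσ F hF hFK⟩
  intro C hC
  obtain ⟨hCK, hCc⟩ := card_mem_contFam n k ℓ s σ q hk hq0 hσ1 C hC
  refine ⟨hCK, ?_⟩
  have hCc' : C.card ≤ n ^ (k - 2) * A + ℓ * (n ^ (k - 2) * ((2 ^ k * s) * (2 ^ k * (n / q)))) +
      n.choose (k - 1) * (σ - 1) := by
    refine hCc.trans (le_of_eq ?_)
    rw [hA]; ring
  have hR : (C.card : ℝ) ≤ (n : ℝ) ^ (k - 2) * A +
      ℓ * ((n : ℝ) ^ (k - 2) * ((2 ^ k * s) * (2 ^ k * ((n : ℝ) / q)))) +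
      n.choose (k - 1) * ((σ : ℝ) - 1) := by
    have h3 : (C.card : ℝ) ≤ (n : ℝ) ^ (k - 2) * A +
      ℓ * ((n : ℝ) ^ (k - 2) * ((2 ^ k * s) * (2 ^ k * ((n / q : ℕ) : ℝ)))) +
      n.choose (k - 1) * (((σ - 1 : ℕ) : ℝ)) := by exact_mod_cast hCc'
    rw [Nat.cast_sub hσ1, Nat.cast_one] at h3
    refine h3.trans ?_
    have := Nat.cast_div_le (α := ℝ) (m := n) (n := q)
    gcongr
  have hn0 : (0 : ℝ) < n := by
    have : 0 < n := by omega
    exact_mod_cast this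
  have hnn : 2 * (c * A) ≤ δ * n := by
    have h3 : (n1 : ℝ) ≤ n := by
      have : n1 ≤ n := by omega
      exact_mod_cast this
    have : 2 * (c * A) / δ ≤ n := by linarith
    rwa [div_le_iff₀ hδ, mul_comm (n : ℝ)] at this
  have hch := pow_le_choose' (k - 1) n (by omega)
  rw [← hc] at hch
  have hpow : (n : ℝ) ^ (k - 1) = n ^ (k - 2) * n := by
    rw [← pow_succ]; congr 1; omega
  have t1 : (n : ℝ) ^ (k - 2) * A ≤ δ / 2 * n.choose (k - 1) := by
    have e1 : c * ((n : ℝ) ^ (k - 2) * A) ≤ c * (δ / 2 * n.choose (k - 1)) := by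
      calc c * ((n : ℝ) ^ (k - 2) * A) = (n : ℝ) ^ (k - 2) * (c * A) := by ring
        _ ≤ (n : ℝ) ^ (k - 2) * (δ / 2 * n) := by
          apply mul_le_mul_of_nonneg_left _ (by positivity)
          linarith
        _ = δ / 2 * (n : ℝ) ^ (k - 1) := by rw [hpow]; ring
        _ ≤ δ / 2 * (c * n.choose (k - 1)) := by gcongr
        _ = _ := by ring
    exact le_of_mul_le_mul_left e1 hc0
  have hqR : (0 : ℝ) < q := by linarith
  have t2 : ℓ * ((n : ℝ) ^ (k - 2) * ((2 ^ k * s) * (2 ^ k * ((n : ℝ) / q)))) ≤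
      δ / 2 * n.choose (k - 1) := by
    have e0 : ℓ * ((n : ℝ) ^ (k - 2) * ((2 ^ k * s) * (2 ^ k * ((n : ℝ) / q)))) =
        ℓ * B / q * (n : ℝ) ^ (k - 1) := by rw [hpow, hB]; ring
    rw [e0]
    calc _ ≤ ℓ * B / q * (c * n.choose (k - 1)) := by gcongr
      _ = (c * ℓ * B) / q * n.choose (k - 1) := by ring
      _ ≤ _ := by
        apply mul_le_mul_of_nonneg_right _ (by positivity)
        rw [div_le_iff₀ hqR]; linarith
  linarith

/-! ### Part 6: probability -/

/-- The weight of the outcome `G`. -/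
noncomputable def wt (p : ℝ) (K G : Finset (Finset ℕ)) : ℝ :=
  p ^ G.card * (1 - p) ^ (K.card - G.card)

theorem wt_nonneg (p : ℝ) (hp : p ∈ Set.Icc (0 : ℝ) 1) (K G : Finset (Finset ℕ)) :
    0 ≤ wt p K G :=
  mul_nonneg (pow_nonneg hp.1 _) (pow_nonneg (by linarith [hp.2]) _)

theorem mgf_eq (p x : ℝ) (K C : Finset (Finset ℕ)) (hC : C ⊆ K) :
    ∑ G ∈ K.powerset, wt p K G * Real.exp (x * (G ∩ C).card) =
      (1 + p * (Real.exp x - 1)) ^ C.card := by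
  have h := Finset.prod_add (fun E => p * if E ∈ C then Real.exp x else 1) (fun _ => 1 - p) K
  have hl : ∏ E ∈ K, ((p * if E ∈ C then Real.exp x else 1) + (1 - p)) =
      (1 + p * (Real.exp x - 1)) ^ C.card := by
    have : ∀ E ∈ K, ((p * if E ∈ C then Real.exp x else 1) + (1 - p)) =
        if E ∈ C then 1 + p * (Real.exp x - 1) else 1 := by
      intro E _
      split_ifs <;> ring
    rw [Finset.prod_congr rfl this, Finset.prod_ite_mem, Finset.prod_const,
      Finset.inter_eq_right.2 hC]
  rw [← hl, h]
  apply Finset.sum_congr rfl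
  intro G hG
  rw [Finset.prod_mul_distrib, Finset.prod_const, Finset.prod_ite_mem, Finset.prod_const,
    Finset.prod_const, Finset.card_sdiff_of_subset (Finset.mem_powerset.1 hG), wt,
    ← Real.exp_nat_mul, mul_comm x]
  ring

theorem sum_wt (p : ℝ) (K : Finset (Finset ℕ)) : ∑ G ∈ K.powerset, wt p K G = 1 := by
  have := mgf_eq p 0 K ∅ (by simp)
  simpa using this

theorem markov (p x a : ℝ) (hp : p ∈ Set.Icc (0 : ℝ) 1) (K C : Finset (Finset ℕ)) (hC : C ⊆ K)
    (A : Finset (Finset ℕ) → Prop) (hA : ∀ G ∈ K.powerset, A G → a ≤ x * (G ∩ C).card) :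
    ∑ G ∈ K.powerset.filter A, wt p K G ≤
      Real.exp (p * C.card * (Real.exp x - 1) - a) := by
  have h1 : ∑ G ∈ K.powerset.filter A, wt p K G ≤
      ∑ G ∈ K.powerset, wt p K G * Real.exp (x * (G ∩ C).card) * Real.exp (-a) := by
    rw [Finset.sum_filter]
    apply Finset.sum_le_sum
    intro G hG
    have h0 := wt_nonneg p hp K G
    split_ifs with h
    · rw [mul_assoc, ← Real.exp_add]
      have : 1 ≤ Real.exp (x * (G ∩ C).card + -a) := Real.one_le_exp (by linarith [hA G hG h])
      nlinarith
    · positivity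
  rw [← Finset.sum_mul, mgf_eq p x K C hC] at h1
  refine h1.trans ?_
  have hpos : 0 ≤ 1 + p * (Real.exp x - 1) := by
    have := Real.exp_pos x
    nlinarith [hp.1, hp.2]
  have h2 : (1 + p * (Real.exp x - 1)) ^ C.card ≤ Real.exp (p * (Real.exp x - 1)) ^ C.card := by
    apply pow_le_pow_left₀ hpos
    linarith [Real.add_one_le_exp (p * (Real.exp x - 1))]
  calc _ ≤ Real.exp (p * (Real.exp x - 1)) ^ C.card * Real.exp (-a) := by gcongr
    _ = _ := by
      rw [← Real.exp_nat_mul, ← Real.exp_add]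
      congr 1; ring

theorem chernoff_up (p μ δ N : ℝ) (hp : p ∈ Set.Icc (0 : ℝ) 1) (hμ : 0 ≤ μ) (hδ : 0 < δ)
    (K C : Finset (Finset ℕ)) (hC : C ⊆ K) (hN : 0 ≤ N)
    (hCc : (C.card : ℝ) ≤ (μ + δ) * N) :
    ∑ G ∈ K.powerset.filter (fun G => (μ + 2 * δ) * p * N < (G ∩ C).card), wt p K G ≤
      Real.exp (-(δ ^ 2 / (4 * (μ + δ)) * (p * N))) := by
  set t := δ / (2 * (μ + δ)) with ht
  have hμδ : 0 < μ + δ := by linarith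
  have ht0 : 0 ≤ t := by positivity
  have htμ : t * (μ + δ) = δ / 2 := by rw [ht]; field_simp
  have ht1 : t ≤ 1 := by
    rw [ht, div_le_one (by positivity)]; linarith
  have hexp : Real.exp t - 1 ≤ t + t ^ 2 := by
    have := (abs_le.1 (Real.abs_exp_sub_one_sub_id_le (x := t) (by rw [abs_of_nonneg ht0]; exact ht1))).2
    linarith
  have hexp0 : 0 ≤ Real.exp t - 1 := by linarith [Real.add_one_le_exp t]
  refine (markov p t (t * ((μ + 2 * δ) * p * N)) hp K C hC _ ?_).trans ?_
  · intro G _ h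
    exact mul_le_mul_of_nonneg_left h.le ht0
  · apply Real.exp_le_exp.2
    have hpN : 0 ≤ p * N := mul_nonneg hp.1 hN
    have h1 : p * C.card * (Real.exp t - 1) ≤ (μ + δ) * (t + t ^ 2) * (p * N) := by
      calc p * C.card * (Real.exp t - 1) ≤ p * ((μ + δ) * N) * (t + t ^ 2) := by
            apply mul_le_mul (mul_le_mul_of_nonneg_left hCc hp.1) hexp hexp0
            have := hp.1
            positivity
        _ = _ := by ring
    have h2 : (μ + δ) * (t + t ^ 2) - t * (μ + 2 * δ) = -(δ ^ 2 / (4 * (μ + δ))) := by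
      rw [ht]; field_simp; ring
    calc _ ≤ (μ + δ) * (t + t ^ 2) * (p * N) - t * ((μ + 2 * δ) * p * N) := by linarith
      _ = ((μ + δ) * (t + t ^ 2) - t * (μ + 2 * δ)) * (p * N) := by ring
      _ = _ := by rw [h2]; ring
      _ ≤ _ := le_refl _

theorem chernoff_low (p μ δ N : ℝ) (hp : p ∈ Set.Icc (0 : ℝ) 1) (hμ : 0 ≤ μ) (hδ : 0 < δ)
    (K C : Finset (Finset ℕ)) (hC : C ⊆ K) (hN : 0 ≤ N)
    (hCc : (μ - δ) * N ≤ (C.card : ℝ)) :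
    ∑ G ∈ K.powerset.filter (fun G => ((G ∩ C).card : ℝ) < (μ - 2 * δ) * p * N), wt p K G ≤
      Real.exp (-(δ ^ 2 / (4 * (μ + δ)) * (p * N))) := by
  set t := δ / (2 * (μ + δ)) with ht
  have hμδ : 0 < μ + δ := by linarith
  have ht0 : 0 ≤ t := by positivity
  have htμ : t * (μ + δ) = δ / 2 := by rw [ht]; field_simp
  have ht1 : t ≤ 1 := by
    rw [ht, div_le_one (by positivity)]; linarith
  have hexp : Real.exp (-t) - 1 ≤ -t + t ^ 2 := by
    have := (abs_le.1 (Real.abs_exp_sub_one_sub_id_le (x := -t)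
      (by rw [abs_neg, abs_of_nonneg ht0]; exact ht1))).2
    nlinarith
  refine (markov p (-t) (-t * ((μ - 2 * δ) * p * N)) hp K C hC _ ?_).trans ?_
  · intro G _ h
    exact mul_le_mul_of_nonpos_left h.le (by linarith)
  · apply Real.exp_le_exp.2
    have hpN : 0 ≤ p * N := mul_nonneg hp.1 hN
    have hneg : -t + t ^ 2 ≤ 0 := by nlinarith
    have h1 : p * C.card * (Real.exp (-t) - 1) ≤ (μ - δ) * (-t + t ^ 2) * (p * N) := by
      calc p * C.card * (Real.exp (-t) - 1) ≤ p * C.card * (-t + t ^ 2) :=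
            mul_le_mul_of_nonneg_left hexp (mul_nonneg hp.1 (Nat.cast_nonneg _))
        _ ≤ p * ((μ - δ) * N) * (-t + t ^ 2) :=
            mul_le_mul_of_nonpos_right (mul_le_mul_of_nonneg_left hCc hp.1) hneg
        _ = _ := by ring
    have h2 : (μ + δ) * t ^ 2 - t * δ = -(δ ^ 2 / (4 * (μ + δ))) := by
      rw [ht]; field_simp; ring
    calc _ ≤ (μ - δ) * (-t + t ^ 2) * (p * N) + t * ((μ - 2 * δ) * p * N) := by linarith
      _ = ((μ - δ) * t ^ 2 - t * δ) * (p * N) := by ring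
      _ ≤ ((μ + δ) * t ^ 2 - t * δ) * (p * N) := by
        apply mul_le_mul_of_nonneg_right _ hpN
        nlinarith [sq_nonneg t]
      _ = _ := by rw [h2]; ring

/-! ### The star family -/

theorem hypertree_nonempty {α : Type} [DecidableEq α] {H : Finset (Finset α)}
    (h : IsHypertree H) : H.Nonempty := by
  cases h with
  | single E => simp
  | grow E F _ _ _ _ => simp

/-- The star family. -/
noncomputable def starFam (n k m : ℕ) : Finset (Finset ℕ) :=
  ((vtx n).powersetCard k).filter fun E => (E ∩ vtx m).card = 1

theorem star_hfree {α : Type} [DecidableEq α] (k n σ : ℕ) (H : Finset (Finset α))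
    (hσ : IsCrosscutNumber H σ) (hσ1 : 1 ≤ σ) (F : Finset (Finset ℕ))
    (hF : F ⊆ starFam n k (σ - 1)) : HFree H F := by
  rintro K hK ⟨φ, hφ, rfl⟩
  set S' := (vertexSet H).filter fun v => φ v ∈ vtx (σ - 1) with hS'
  have hcut : IsCrosscut H S' := by
    intro E hE
    have hEV : E ⊆ vertexSet H := subset_vertexSet hE
    have h1 : E.image φ ∈ starFam n k (σ - 1) := hF (hK (Finset.mem_image_of_mem _ hE))
    have h2 := (Finset.mem_filter.1 h1).2
    have h3 : E.image φ ∩ vtx (σ - 1) = (E ∩ S').image φ := by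
      ext y
      simp only [Finset.mem_inter, Finset.mem_image, hS', Finset.mem_filter]
      constructor
      · rintro ⟨⟨v, hv, rfl⟩, hy⟩
        exact ⟨v, ⟨hv, hEV hv, hy⟩, rfl⟩
      · rintro ⟨v, ⟨hv, _, hy⟩, rfl⟩
        exact ⟨⟨v, hv, rfl⟩, hy⟩
    rw [h3, Finset.card_image_of_injOn] at h2
    · exact h2
    · exact hφ.mono (by
        intro v hv
        exact hEV (Finset.mem_inter.1 (Finset.mem_coe.1 hv)).1)
  have h4 : σ ≤ S'.card := hσ.2 ⟨S', hcut, rfl⟩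
  have h5 : S'.card ≤ σ - 1 := by
    rw [← card_vtx (σ - 1)]
    apply Finset.card_le_card_of_injOn φ
    · intro v hv
      exact (Finset.mem_filter.1 (Finset.mem_coe.1 hv)).2
    · exact hφ.mono (by
        intro v hv
        exact (Finset.mem_filter.1 (Finset.mem_coe.1 hv)).1)
  omega

theorem choose_shift (m r : ℕ) : ∀ j, (m + j).choose (r + 1) ≤ m.choose (r + 1) + j * (m + j) ^ r
  | 0 => by simp
  | j + 1 => by
    have ih := choose_shift m r j
    rw [← add_assoc, Nat.choose_succ_succ]
    have h1 : (m + j).choose r ≤ (m + j + 1) ^ r :=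
      (Nat.choose_le_pow _ _).trans (Nat.pow_le_pow_left (by omega) _)
    have h2 : j * (m + j) ^ r ≤ j * (m + j + 1) ^ r :=
      Nat.mul_le_mul_left _ (Nat.pow_le_pow_left (by omega) _)
    have h3 : (j + 1) * (m + j + 1) ^ r = j * (m + j + 1) ^ r + (m + j + 1) ^ r := by ring
    simp only [Nat.succ_eq_add_one]
    omega

theorem card_star (n k m : ℕ) (hk : 1 ≤ k) (hm : m ≤ n) :
    m * (n - m).choose (k - 1) ≤ (starFam n k m).card := by
  have hmn : vtx m ⊆ vtx n := by
    intro x hx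
    simp only [vtx, Finset.mem_Icc] at hx ⊢
    omega
  have h1 : ((vtx m) ×ˢ (vtx n \ vtx m).powersetCard (k - 1)).card = m * (n - m).choose (k - 1) := by
    rw [Finset.card_product, Finset.card_powersetCard, Finset.card_sdiff_of_subset hmn, card_vtx,
      card_vtx]
  rw [← h1]
  have hkey : ∀ x ∈ vtx m, ∀ D ⊆ vtx n \ vtx m, x ∉ D ∧ insert x D ∩ vtx m = {x} := by
    intro x hx D hD
    have hd : ∀ y ∈ D, y ∉ vtx m := fun y hy => (Finset.mem_sdiff.1 (hD hy)).2
    refine ⟨fun h => hd x h hx, ?_⟩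
    ext y
    simp only [Finset.mem_inter, Finset.mem_insert, Finset.mem_singleton]
    constructor
    · rintro ⟨rfl | h, h'⟩
      · rfl
      · exact absurd h' (hd y h)
    · rintro rfl; exact ⟨Or.inl rfl, hx⟩
  apply Finset.card_le_card_of_injOn fun z => insert z.1 z.2
  · rintro ⟨x, D⟩ hz
    obtain ⟨hx, hD⟩ := Finset.mem_product.1 (Finset.mem_coe.1 hz)
    obtain ⟨hD, hDc⟩ := Finset.mem_powersetCard.1 hD
    obtain ⟨h2, h3⟩ := hkey x hx D hD
    refine Finset.mem_coe.2 (Finset.mem_filter.2 ⟨Finset.mem_powersetCard.2 ⟨?_, ?_⟩, ?_⟩)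
    · exact Finset.insert_subset (hmn hx) (hD.trans Finset.sdiff_subset)
    · simp only at hDc h2 ⊢
      rw [Finset.card_insert_of_notMem h2, hDc]; omega
    · simp only at h3 ⊢
      rw [h3]; simp
  · rintro ⟨x, D⟩ hz ⟨x', D'⟩ hz' h
    obtain ⟨hx, hD⟩ := Finset.mem_product.1 (Finset.mem_coe.1 hz)
    obtain ⟨hD, hDc⟩ := Finset.mem_powersetCard.1 hD
    obtain ⟨h2, h3⟩ := hkey x hx D hD
    obtain ⟨hx', hD'⟩ := Finset.mem_product.1 (Finset.mem_coe.1 hz')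
    obtain ⟨hD', hDc'⟩ := Finset.mem_powersetCard.1 hD'
    obtain ⟨h2', h3'⟩ := hkey x' hx' D' hD'
    simp only at h h2 h3 h2' h3'
    have hxx : x = x' := by
      rw [h, h3'] at h3
      exact (Finset.singleton_injective h3).symm
    subst hxx
    have : D = D' := by
      rw [← Finset.erase_insert h2, h, Finset.erase_insert h2']
    rw [this]

theorem star_large (k σ : ℕ) (hk : 4 ≤ k) (hσ1 : 1 ≤ σ) (δ : ℝ) (hδ : 0 < δ) :
    ∃ n0 : ℕ, ∀ n ≥ n0,
      ((σ : ℝ) - 1 - δ) * (n.choose (k - 1) : ℝ) ≤ ((starFam n k (σ - 1)).card : ℝ) := by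
  obtain ⟨m, rfl⟩ : ∃ m, σ = m + 1 := ⟨σ - 1, by omega⟩
  set c : ℝ := 2 ^ (k - 1) * (k - 1).factorial with hc
  have hc0 : 0 < c := by positivity
  obtain ⟨n1, hn1⟩ := exists_nat_gt (c * (m * m : ℝ) / δ)
  refine ⟨n1 + 2 * k + m + 1, ?_⟩
  intro n hn
  have h1 := card_star n k m (by omega) (by omega)
  have h2 := choose_shift (n - m) (k - 2) m
  rw [show n - m + m = n by omega, show k - 2 + 1 = k - 1 by omega] at h2
  have hch := pow_le_choose' (k - 1) n (by omega)
  rw [← hc] at hch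
  have hpow : (n : ℝ) ^ (k - 1) = n ^ (k - 2) * n := by
    rw [← pow_succ]; congr 1; omega
  have h1' : (m : ℝ) * ((n - m).choose (k - 1) : ℝ) ≤ ((starFam n k m).card : ℝ) := by
    exact_mod_cast h1
  have h2' : (n.choose (k - 1) : ℝ) ≤ ((n - m).choose (k - 1) : ℝ) + m * (n : ℝ) ^ (k - 2) := by
    exact_mod_cast h2
  have hnn : c * (m * m : ℝ) ≤ δ * n := by
    have h3 : (n1 : ℝ) ≤ n := by
      have : n1 ≤ n := by omega
      exact_mod_cast this
    have : c * (m * m : ℝ) / δ ≤ n := by linarith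
    rwa [div_le_iff₀ hδ, mul_comm (n : ℝ)] at this
  have h4 : (m : ℝ) * (m * (n : ℝ) ^ (k - 2)) ≤ δ * n.choose (k - 1) := by
    have e1 : c * ((m : ℝ) * (m * (n : ℝ) ^ (k - 2))) ≤ c * (δ * n.choose (k - 1)) := by
      calc c * ((m : ℝ) * (m * (n : ℝ) ^ (k - 2))) = (n : ℝ) ^ (k - 2) * (c * (m * m)) := by ring
        _ ≤ (n : ℝ) ^ (k - 2) * (δ * n) := by
          apply mul_le_mul_of_nonneg_left hnn (by positivity)
        _ = δ * (n : ℝ) ^ (k - 1) := by rw [hpow]; ring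
        _ ≤ δ * (c * n.choose (k - 1)) := by gcongr
        _ = _ := by ring
    exact le_of_mul_le_mul_left e1 hc0
  have h5 := mul_le_mul_of_nonneg_left h2' (Nat.cast_nonneg (α := ℝ) m)
  simp only [Nat.add_sub_cancel]
  push_cast
  linarith

/-! ### Part 7: conclusion -/

theorem sum_biUnion_le_sum (𝒞 : Finset (Finset (Finset ℕ)))
    (X : Finset (Finset ℕ) → Finset (Finset (Finset ℕ))) (f : Finset (Finset ℕ) → ℝ)
    (hf : ∀ G, 0 ≤ f G) : ∑ G ∈ 𝒞.biUnion X, f G ≤ ∑ C ∈ 𝒞, ∑ G ∈ X C, f G := by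
  induction 𝒞 using Finset.induction_on with
  | empty => simp
  | insert C 𝒞 hC ih =>
    rw [Finset.biUnion_insert, Finset.sum_insert hC]
    have h1 := Finset.sum_union_inter (s₁ := X C) (s₂ := 𝒞.biUnion X) (f := f)
    have h2 : 0 ≤ ∑ G ∈ X C ∩ 𝒞.biUnion X, f G := Finset.sum_nonneg fun G _ => hf G
    linarith

theorem prob_bound (k n : ℕ) (p e : ℝ) (hp : p ∈ Set.Icc (0 : ℝ) 1)
    (A : Finset (Finset ℕ) → Prop) (𝒞 : Finset (Finset (Finset ℕ)))
    (B : Finset (Finset ℕ) → Finset (Finset ℕ) → Prop) (B0 : Finset (Finset ℕ) → Prop)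
    (hA : ∀ G ⊆ (vtx n).powersetCard k, ¬ A G → (∃ C ∈ 𝒞, B C G) ∨ B0 G)
    (hB : ∀ C ∈ 𝒞, ∑ G ∈ ((vtx n).powersetCard k).powerset.filter (B C),
      wt p ((vtx n).powersetCard k) G ≤ e)
    (hB0 : ∑ G ∈ ((vtx n).powersetCard k).powerset.filter B0,
      wt p ((vtx n).powersetCard k) G ≤ e) :
    1 - (𝒞.card + 1) * e ≤ probEvent k n p A ∧ probEvent k n p A ≤ 1 := by
  set K := (vtx n).powersetCard k with hK
  have hdef : probEvent k n p A = ∑ G ∈ K.powerset.filter A, wt p K G := rfl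
  have htot := sum_wt p K
  rw [← Finset.sum_filter_add_sum_filter_not K.powerset A] at htot
  have hnn := fun G => wt_nonneg p hp K G
  have h0 : 0 ≤ ∑ G ∈ K.powerset.filter (fun G => ¬ A G), wt p K G :=
    Finset.sum_nonneg fun G _ => hnn G
  have h1 : ∑ G ∈ K.powerset.filter (fun G => ¬ A G), wt p K G ≤ (𝒞.card + 1) * e := by
    have hsub : K.powerset.filter (fun G => ¬ A G) ⊆
        (𝒞.biUnion fun C => K.powerset.filter (B C)) ∪ K.powerset.filter B0 := by
      intro G hG
      obtain ⟨hGK, hGA⟩ := Finset.mem_filter.1 hG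
      rw [Finset.mem_union, Finset.mem_biUnion]
      rcases hA G (Finset.mem_powerset.1 hGK) hGA with ⟨C, hC, h⟩ | h
      · exact Or.inl ⟨C, hC, Finset.mem_filter.2 ⟨hGK, h⟩⟩
      · exact Or.inr (Finset.mem_filter.2 ⟨hGK, h⟩)
    have h2 : ∑ G ∈ 𝒞.biUnion (fun C => K.powerset.filter (B C)), wt p K G ≤ 𝒞.card * e := by
      calc _ ≤ ∑ C ∈ 𝒞, ∑ G ∈ K.powerset.filter (B C), wt p K G :=
            sum_biUnion_le_sum 𝒞 _ _ hnn
        _ ≤ ∑ C ∈ 𝒞, e := Finset.sum_le_sum hB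
        _ = _ := by rw [Finset.sum_const, nsmul_eq_mul]
    calc _ ≤ ∑ G ∈ (𝒞.biUnion fun C => K.powerset.filter (B C)) ∪ K.powerset.filter B0,
          wt p K G := Finset.sum_le_sum_of_subset_of_nonneg hsub fun G _ _ => hnn G
      _ ≤ ∑ G ∈ 𝒞.biUnion (fun C => K.powerset.filter (B C)), wt p K G +
          ∑ G ∈ K.powerset.filter B0, wt p K G := by
        rw [← Finset.sum_union_inter]
        have : 0 ≤ ∑ G ∈ (𝒞.biUnion fun C => K.powerset.filter (B C)) ∩ K.powerset.filter B0,
          wt p K G := Finset.sum_nonneg fun G _ => hnn G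
        linarith
      _ ≤ _ := by linarith
  rw [hdef]
  constructor <;> linarith

theorem card_le_exIn {α : Type} [DecidableEq α] (H : Finset (Finset α))
    (G F : Finset (Finset ℕ)) (hFG : F ⊆ G) (hF : HFree H F) : F.card ≤ exIn H G :=
  Finset.le_sup (f := Finset.card) (Finset.mem_filter.2 ⟨Finset.mem_powerset.2 hFG, hF⟩)

theorem exIn_le {α : Type} [DecidableEq α] (H : Finset (Finset α))
    (G : Finset (Finset ℕ)) (a : ℝ) (ha : 0 ≤ a)
    (h : ∀ F ⊆ G, HFree H F → (F.card : ℝ) ≤ a) : (exIn H G : ℝ) ≤ a := by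
  have : exIn H G ≤ ⌊a⌋₊ := by
    apply Finset.sup_le
    intro F hF
    obtain ⟨hFG, hF⟩ := Finset.mem_filter.1 hF
    exact Nat.le_floor (h F (Finset.mem_powerset.1 hFG) hF)
  exact (Nat.le_floor_iff ha).1 this

theorem prob_main {α : Type} [DecidableEq α] (k ℓ : ℕ) (hk : 4 ≤ k)
    (H : Finset (Finset α)) (hH : IsKTree k H) (h2 : TwoContractible H)
    (hov : Overlapping ℓ H) (σ : ℕ) (hσ : IsCrosscutNumber H σ)
    (ε : ℝ) (hε : 0 < ε) :
    ∃ (M n0 : ℕ) (c : ℝ), 0 < c ∧ ∀ n ≥ n0, ∀ p ∈ Set.Icc (0 : ℝ) 1,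
      1 - 2 * (n + 1 : ℝ) ^ (M * (n + 1) ^ ℓ) * Real.exp (-(c * (p * n.choose (k - 1)))) ≤
        probEvent k n p (fun G =>
          ((σ : ℝ) - 1 - ε) * p * (n.choose (k - 1) : ℝ) ≤ (exIn H G : ℝ) ∧
          (exIn H G : ℝ) ≤ ((σ : ℝ) - 1 + ε) * p * (n.choose (k - 1) : ℝ)) ∧
      probEvent k n p (fun G =>
          ((σ : ℝ) - 1 - ε) * p * (n.choose (k - 1) : ℝ) ≤ (exIn H G : ℝ) ∧
          (exIn H G : ℝ) ≤ ((σ : ℝ) - 1 + ε) * p * (n.choose (k - 1) : ℝ)) ≤ 1 := by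
  obtain ⟨S0, hS0, hS0c⟩ := hσ.1
  have hσ1 : 1 ≤ σ := by
    obtain ⟨E, hE⟩ := hypertree_nonempty hH.1
    have := hS0 E hE
    rw [← hS0c, ← this]
    exact Finset.card_le_card Finset.inter_subset_right
  set δ := ε / 2 with hδ
  have hδ0 : 0 < δ := by positivity
  have hε2 : ε = 2 * δ := by rw [hδ]; ring
  set μ : ℝ := (σ : ℝ) - 1 with hμ
  have hμ0 : 0 ≤ μ := by
    have : (1 : ℝ) ≤ σ := by exact_mod_cast hσ1
    linarith
  obtain ⟨M, n1, hM⟩ := containers k ℓ hk H hH h2 hov σ hσ1 ⟨S0, hS0, hS0c⟩ δ hδ0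
  obtain ⟨n2, hn2⟩ := star_large k σ hk hσ1 δ hδ0
  refine ⟨M, n1 + n2, δ ^ 2 / (4 * (μ + δ)), by positivity, ?_⟩
  intro n hn p hp
  obtain ⟨𝒞, hcard, hsize, hcov⟩ := hM n (by omega)
  have hN : (0 : ℝ) ≤ n.choose (k - 1) := Nat.cast_nonneg _
  set N : ℝ := ((n.choose (k - 1) : ℕ) : ℝ) with hNdef
  have hb := prob_bound k n p (Real.exp (-(δ ^ 2 / (4 * (μ + δ)) * (p * N)))) hp
    (fun G => (μ - ε) * p * N ≤ (exIn H G : ℝ) ∧ (exIn H G : ℝ) ≤ (μ + ε) * p * N) 𝒞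
    (fun C G => (μ + 2 * δ) * p * N < (G ∩ C).card)
    (fun G => ((G ∩ starFam n k (σ - 1)).card : ℝ) < (μ - 2 * δ) * p * N) ?_ ?_ ?_
  · refine ⟨le_trans ?_ hb.1, hb.2⟩
    have h1 : (𝒞.card : ℝ) ≤ (n + 1 : ℝ) ^ (M * (n + 1) ^ ℓ) := by exact_mod_cast hcard
    have h3 : (1 : ℝ) ≤ (n + 1 : ℝ) ^ (M * (n + 1) ^ ℓ) :=
      one_le_pow₀ (by linarith [Nat.cast_nonneg (α := ℝ) n])
    have h4 := mul_le_mul_of_nonneg_right (show (𝒞.card : ℝ) + 1 ≤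
      2 * (n + 1 : ℝ) ^ (M * (n + 1) ^ ℓ) by linarith)
      (Real.exp_pos (-(δ ^ 2 / (4 * (μ + δ)) * (p * N)))).le
    linarith
  · intro G hG hnA
    by_contra hcon
    push Not at hcon
    obtain ⟨hc1, hc2⟩ := hcon
    apply hnA
    refine ⟨?_, ?_⟩
    · rw [hε2]
      refine hc2.trans ?_
      exact_mod_cast card_le_exIn H G _ Finset.inter_subset_left
        (star_hfree k n σ H hσ hσ1 _ Finset.inter_subset_right)
    · rw [hε2]
      apply exIn_le
      · have := hp.1
        positivity
      · intro F hFG hF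
        obtain ⟨C, hC, hFC⟩ := hcov F (hFG.trans hG) hF
        refine le_trans ?_ (hc1 C hC)
        exact_mod_cast Finset.card_le_card (Finset.subset_inter hFG hFC)
  · intro C hC
    convert chernoff_up p μ δ N hp hμ0 hδ0 _ C (hsize C hC).1 hN (hsize C hC).2
  · convert chernoff_low p μ δ N hp hμ0 hδ0 _ (starFam n k (σ - 1)) (Finset.filter_subset _ _) hN (hn2 n (by omega))

theorem err_bound (k ℓ M n : ℕ) (c p : ℝ) (hc : 0 < c) (hkl : ℓ + 1 ≤ k) (hn : 2 * k ≤ n)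
    (hn2 : 2 ≤ n) (hp : 0 ≤ p) (hlog : 1 ≤ Real.log n)
    (hg : (2 ^ (k - 1) * (k - 1).factorial : ℝ) * (M * 2 ^ (ℓ + 1) + 1) / c ≤
      p * (n : ℝ) ^ (k - ℓ - 1) / (Real.log n) ^ 2) :
    2 * (n + 1 : ℝ) ^ (M * (n + 1) ^ ℓ) * Real.exp (-(c * (p * n.choose (k - 1)))) ≤ 2 / n := by
  set c' : ℝ := 2 ^ (k - 1) * (k - 1).factorial with hc'
  have hc0 : 0 < c' := by positivity
  set l := Real.log n with hl
  have hn0 : (0 : ℝ) < n := by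
    have : 0 < n := by omega
    exact_mod_cast this
  have hnR : (2 : ℝ) ≤ n := by exact_mod_cast hn2
  have hl2 : 0 < l ^ 2 := by positivity
  have hch := pow_le_choose' (k - 1) n (by omega)
  rw [← hc'] at hch
  have hpow : (n : ℝ) ^ (k - 1) = n ^ (k - ℓ - 1) * n ^ ℓ := by
    rw [← pow_add]; congr 1; omega
  have hlog1 : Real.log (n + 1) ≤ 2 * l := by
    rw [hl, show (2 : ℝ) * Real.log n = Real.log ((n : ℝ) ^ 2) by rw [Real.log_pow]; norm_num]
    apply Real.log_le_log (by positivity)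
    nlinarith
  have hlog0 : 0 ≤ Real.log (n + 1 : ℝ) := Real.log_nonneg (by linarith)
  have h1 : (n + 1 : ℝ) ^ (M * (n + 1) ^ ℓ) = Real.exp (M * (n + 1 : ℝ) ^ ℓ * Real.log (n + 1)) := by
    rw [← Real.exp_log (show (0 : ℝ) < (n + 1 : ℝ) ^ (M * (n + 1) ^ ℓ) by positivity), Real.log_pow]
    push_cast
    rfl
  have h2 : M * (n + 1 : ℝ) ^ ℓ * Real.log (n + 1) ≤ M * 2 ^ (ℓ + 1) * ((n : ℝ) ^ ℓ * l) := by
    calc _ ≤ M * (2 * n : ℝ) ^ ℓ * (2 * l) := by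
          gcongr
          linarith
      _ = _ := by rw [mul_pow]; ring
  have h3 : (M * 2 ^ (ℓ + 1) + 1) * ((n : ℝ) ^ ℓ * l) ≤ c * (p * n.choose (k - 1)) := by
    rw [div_le_div_iff₀ hc hl2] at hg
    have e1 : c' * ((M * 2 ^ (ℓ + 1) + 1) * ((n : ℝ) ^ ℓ * l)) ≤
        c' * (c * (p * n.choose (k - 1))) := by
      calc c' * ((M * 2 ^ (ℓ + 1) + 1) * ((n : ℝ) ^ ℓ * l)) ≤
            c' * ((M * 2 ^ (ℓ + 1) + 1) * ((n : ℝ) ^ ℓ * l ^ 2)) := by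
            gcongr
            nlinarith
        _ = (c' * (M * 2 ^ (ℓ + 1) + 1) * l ^ 2) * (n : ℝ) ^ ℓ := by ring
        _ ≤ (p * (n : ℝ) ^ (k - ℓ - 1) * c) * (n : ℝ) ^ ℓ := by gcongr
        _ = c * p * (n : ℝ) ^ (k - 1) := by rw [hpow]; ring
        _ ≤ c * p * (c' * n.choose (k - 1)) := by gcongr
        _ = _ := by ring
    exact le_of_mul_le_mul_left e1 hc0
  have h4 : l ≤ (n : ℝ) ^ ℓ * l := by
    have : (1 : ℝ) ≤ (n : ℝ) ^ ℓ := one_le_pow₀ (by linarith)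
    nlinarith
  rw [h1, mul_assoc, ← Real.exp_add]
  have h5 : Real.exp (M * (n + 1 : ℝ) ^ ℓ * Real.log (n + 1) + -(c * (p * n.choose (k - 1)))) ≤
      Real.exp (-l) := Real.exp_le_exp.2 (by linarith)
  rw [Real.exp_neg l, hl, Real.exp_log hn0] at h5
  rw [div_eq_mul_inv]
  linarith

/-- random Turán for 2-contractible `ℓ`-overlapping `k`-trees: for
`p·n^{k−ℓ−1}/(log n)² → ∞`, whp `ex(G^(k)(n,p),H) = (σ−1+o(1))·p·C(n,k−1)`. -/
theorem stmt_2 {α : Type} [DecidableEq α] (k ℓ : ℕ) (hk : 4 ≤ k)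
    (H : Finset (Finset α)) (hH : IsKTree k H) (h2 : TwoContractible H)
    (hov : Overlapping ℓ H) (σ : ℕ) (hσ : IsCrosscutNumber H σ)
    (p : ℕ → ℝ) (hp : ∀ n, p n ∈ Set.Icc (0 : ℝ) 1)
    (hgrow : Tendsto (fun n : ℕ => p n * (n : ℝ) ^ (k - ℓ - 1) / (Real.log n) ^ 2)
      atTop atTop) :
    ∀ ε : ℝ, 0 < ε →
      Tendsto (fun n : ℕ => probEvent k n (p n) (fun G =>
          ((σ : ℝ) - 1 - ε) * p n * (n.choose (k - 1) : ℝ) ≤ (exIn H G : ℝ) ∧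
          (exIn H G : ℝ) ≤ ((σ : ℝ) - 1 + ε) * p n * (n.choose (k - 1) : ℝ)))
        atTop (nhds 1) := by
  intro ε hε
  have hlogev : ∀ᶠ n : ℕ in atTop, 1 ≤ Real.log n :=
    (Real.tendsto_log_atTop.comp tendsto_natCast_atTop_atTop).eventually_ge_atTop 1
  have hkl : ℓ + 1 ≤ k := by
    by_contra hcon
    have h0 : k - ℓ - 1 = 0 := by omega
    obtain ⟨n, h1, h3⟩ := ((hgrow.eventually_ge_atTop 2).and hlogev).exists
    rw [h0, pow_zero, mul_one, le_div_iff₀ (by positivity)] at h1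
    nlinarith [(hp n).2]
  obtain ⟨M, n0, c, hc, hmain⟩ := prob_main k ℓ hk H hH h2 hov σ hσ ε hε
  have hlim : Tendsto (fun n : ℕ => 1 - 2 / (n : ℝ)) atTop (nhds 1) := by
    have := (tendsto_const_div_atTop_nhds_zero_nat (2 : ℝ)).const_sub 1
    simpa using this
  refine tendsto_of_tendsto_of_tendsto_of_le_of_le' hlim tendsto_const_nhds ?_ ?_
  · filter_upwards [hlogev, hgrow.eventually_ge_atTop
      ((2 ^ (k - 1) * (k - 1).factorial : ℝ) * (M * 2 ^ (ℓ + 1) + 1) / c),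
      eventually_ge_atTop (n0 + 2 * k + 2)] with n h1 h3 h4
    have h5 := (hmain n (by omega) (p n) (hp n)).1
    have h6 := err_bound k ℓ M n c (p n) hc hkl (by omega) (by omega) (hp n).1 h1 h3
    linarith
  · filter_upwards [eventually_ge_atTop n0] with n h4
    exact (hmain n h4 (p n) (hp n)).2
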